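/- arXiv:1412.6034 — 2 statements merged into one kernel-verified Lean document; each statement's English description precedes it below -/
import Mathlib

section
/- If an FT3S system is FT3S strongly hyperbolic, then it admits a strongly hyperbolic FT2S reduction. Precisely: there exist a choice of reduction parameters (one may take (D^u)^j = -(A^u_u)^j, D_a^j = -B^u_{1u} delta_a^j, (D^v)^j = -(B^v_{1u})^j, (D^w)^{pj} = -(B^w_{1u})^{pj}, (Dbar^u) = 0, (Dbar^v) = 0, (Dbar^w) = 0, and Dbar_a^{jb} = i*lambda*epsilon_a^{jb} with epsilon the Levi-Civita symbol and lambda a sufficiently large real number, larger than sup over unit s of the operator norm of P3(s)) and a constant K > 0 such that for every unit s in R^3 there is an invertible matrix T2(s) with ||T2(s)|| <= K, ||T2(s)^{-1}|| <= K and T2(s)^{-1} P2(s) T2(s) a real diagonal matrix; in particular the system is FT2S strongly hyperbolic. -/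
open Matrix
open scoped ComplexOrder

/-- The Loewner order `A ≤ B` for complex matrices: `B - A` is positive semidefinite. -/
def loewnerLE {n : Type*} [Fintype n] (A B : Matrix n n ℂ) : Prop := (B - A).PosSemidef

/-- The spectral (ℓ²-operator) norm of a complex matrix. -/
noncomputable def matOpNorm {n : Type*} [Fintype n] [DecidableEq n] (M : Matrix n n ℂ) : ℝ :=
  ‖Matrix.toEuclideanCLM (𝕜 := ℂ) M‖

/-- The Levi-Civita symbol on three indices with `lev 0 1 2 = 1`. -/
noncomputable def lev (a b c : Fin 3) : ℝ :=
  if (a, b, c) = (0, 1, 2) ∨ (a, b, c) = (1, 2, 0) ∨ (a, b, c) = (2, 0, 1) then 1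
  else if (a, b, c) = (2, 1, 0) ∨ (a, b, c) = (0, 2, 1) ∨ (a, b, c) = (1, 0, 2) then -1
  else 0

/-- Index type for the FT3S state `(u, v, w)`. -/
abbrev I3 (nu nv nw : ℕ) : Type := Fin nu ⊕ (Fin nv ⊕ Fin nw)

/-- Index type for the FT2S reduction state `(u, d_a, v, w)`. -/
abbrev I2 (nu nv nw : ℕ) : Type := Fin nu ⊕ ((Fin 3 × Fin nu) ⊕ (Fin nv ⊕ Fin nw))

variable {nu nv nw : ℕ}
  (Auu : Fin 3 → Matrix (Fin nu) (Fin nu) ℂ) (Auv : Matrix (Fin nu) (Fin nv) ℂ)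
  (Bu1u : Matrix (Fin nu) (Fin nu) ℂ)
  (Avu : Fin 3 → Fin 3 → Matrix (Fin nv) (Fin nu) ℂ)
  (Avv : Fin 3 → Matrix (Fin nv) (Fin nv) ℂ)
  (Avw : Matrix (Fin nv) (Fin nw) ℂ) (Bv1u : Fin 3 → Matrix (Fin nv) (Fin nu) ℂ)
  (Awu : Fin 3 → Fin 3 → Fin 3 → Matrix (Fin nw) (Fin nu) ℂ)
  (Awv : Fin 3 → Fin 3 → Matrix (Fin nw) (Fin nv) ℂ)
  (Aww : Fin 3 → Matrix (Fin nw) (Fin nw) ℂ)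
  (Bw1u : Fin 3 → Fin 3 → Matrix (Fin nw) (Fin nu) ℂ)

/-- The FT3S principal symbol `P₃(s)`. -/
noncomputable def P3 (s : Fin 3 → ℝ) : Matrix (I3 nu nv nw) (I3 nu nv nw) ℂ :=
  Matrix.of fun r c =>
    match r, c with
    | Sum.inl m, Sum.inl m' => ∑ i, (s i : ℂ) * Auu i m m'
    | Sum.inl m, Sum.inr (Sum.inl q) => Auv m q
    | Sum.inl _, Sum.inr (Sum.inr _) => 0
    | Sum.inr (Sum.inl p), Sum.inl m' => ∑ i, ∑ j, (s i : ℂ) * (s j : ℂ) * Avu i j p m'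
    | Sum.inr (Sum.inl p), Sum.inr (Sum.inl q) => ∑ i, (s i : ℂ) * Avv i p q
    | Sum.inr (Sum.inl p), Sum.inr (Sum.inr t) => Avw p t
    | Sum.inr (Sum.inr t), Sum.inl m' =>
        ∑ i, ∑ j, ∑ k, (s i : ℂ) * (s j : ℂ) * (s k : ℂ) * Awu i j k t m'
    | Sum.inr (Sum.inr t), Sum.inr (Sum.inl q) =>
        ∑ i, ∑ j, (s i : ℂ) * (s j : ℂ) * Awv i j t q
    | Sum.inr (Sum.inr t), Sum.inr (Sum.inr t') => ∑ i, (s i : ℂ) * Aww i t t'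

/-- The principal symbol `P₂(s)` of the FT2S reduction with reduction parameters
`D^u, D̄^u, D, D̄, D^v, D̄^v, D^w, D̄^w`. -/
noncomputable def P2
    (Du : Fin 3 → Matrix (Fin nu) (Fin nu) ℂ)
    (Dbaru : Fin 3 → Fin 3 → Matrix (Fin nu) (Fin nu) ℂ)
    (DD : Fin 3 → Fin 3 → Matrix (Fin nu) (Fin nu) ℂ)
    (Dbar : Fin 3 → Fin 3 → Fin 3 → Matrix (Fin nu) (Fin nu) ℂ)
    (Dv : Fin 3 → Matrix (Fin nv) (Fin nu) ℂ)
    (Dbarv : Fin 3 → Fin 3 → Matrix (Fin nv) (Fin nu) ℂ)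
    (Dw : Fin 3 → Fin 3 → Matrix (Fin nw) (Fin nu) ℂ)
    (Dbarw : Fin 3 → Fin 3 → Fin 3 → Matrix (Fin nw) (Fin nu) ℂ)
    (s : Fin 3 → ℝ) : Matrix (I2 nu nv nw) (I2 nu nv nw) ℂ :=
  Matrix.of fun r c =>
    match r, c with
    | Sum.inl m, Sum.inl m' => ∑ i, (s i : ℂ) * (Auu i + Du i) m m'
    | Sum.inl m, Sum.inr (Sum.inl (b, m')) => ∑ i, (s i : ℂ) * Dbaru i b m m'
    | Sum.inl _, Sum.inr (Sum.inr (Sum.inl _)) => 0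
    | Sum.inl _, Sum.inr (Sum.inr (Sum.inr _)) => 0
    | Sum.inr (Sum.inl (a, m)), Sum.inl m' =>
        ∑ i, (s i : ℂ) * ((if a = i then Bu1u else 0) + DD a i) m m'
    | Sum.inr (Sum.inl (a, m)), Sum.inr (Sum.inl (b, m')) =>
        ∑ i, (s i : ℂ) * ((if a = i then Auu b else 0) + Dbar a i b) m m'
    | Sum.inr (Sum.inl (a, m)), Sum.inr (Sum.inr (Sum.inl q)) => (s a : ℂ) * Auv m q
    | Sum.inr (Sum.inl _), Sum.inr (Sum.inr (Sum.inr _)) => 0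
    | Sum.inr (Sum.inr (Sum.inl p)), Sum.inl m' =>
        ∑ i, (s i : ℂ) * (Bv1u i + Dv i) p m'
    | Sum.inr (Sum.inr (Sum.inl p)), Sum.inr (Sum.inl (b, m')) =>
        ∑ i, (s i : ℂ) * (Avu i b + Dbarv i b) p m'
    | Sum.inr (Sum.inr (Sum.inl p)), Sum.inr (Sum.inr (Sum.inl q)) =>
        ∑ i, (s i : ℂ) * Avv i p q
    | Sum.inr (Sum.inr (Sum.inl p)), Sum.inr (Sum.inr (Sum.inr t)) => Avw p t
    | Sum.inr (Sum.inr (Sum.inr t)), Sum.inl m' =>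
        ∑ i, ∑ j, (s i : ℂ) * (s j : ℂ) * (Bw1u i j + Dw i j) t m'
    | Sum.inr (Sum.inr (Sum.inr t)), Sum.inr (Sum.inl (b, m')) =>
        ∑ i, ∑ j, (s i : ℂ) * (s j : ℂ) * (Awu i j b + Dbarw i j b) t m'
    | Sum.inr (Sum.inr (Sum.inr t)), Sum.inr (Sum.inr (Sum.inl q)) =>
        ∑ i, ∑ j, (s i : ℂ) * (s j : ℂ) * Awv i j t q
    | Sum.inr (Sum.inr (Sum.inr t)), Sum.inr (Sum.inr (Sum.inr t')) =>
        ∑ i, (s i : ℂ) * Aww i t t'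

theorem posSemidef_ofReal_smul {n : Type*} {A : Matrix n n ℂ} {r : ℝ} (hr : 0 ≤ r)
    (hA : A.PosSemidef) :
    ((r : ℂ) • A).PosSemidef :=
  hA.smul (by exact_mod_cast hr)

section SpectralNorm

open scoped MatrixOrder Matrix.Norms.L2Operator

variable {m n : Type*} [Fintype m] [Fintype n] [DecidableEq n]

theorem matOpNorm_eq_norm (A : Matrix n n ℂ) : matOpNorm A = ‖A‖ := rfl

theorem posSemidef_smul_one_sub_conjTranspose_mul_self_iff (A : Matrix m n ℂ) {r : ℝ}
    (hr : 0 ≤ r) : ((r : ℂ) • (1 : Matrix n n ℂ) - Aᴴ * A).PosSemidef ↔ ‖A‖ * ‖A‖ ≤ r := by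
  have h0 : (0 : Matrix n n ℂ) ≤ Aᴴ * A :=
    Matrix.nonneg_iff_posSemidef.2 (Matrix.posSemidef_conjTranspose_mul_self A)
  have h := CStarAlgebra.norm_le_iff_le_algebraMap (Aᴴ * A) hr h0
  rw [Matrix.l2_opNorm_conjTranspose_mul_self] at h
  rw [h, Matrix.le_iff]
  have e : algebraMap ℝ (Matrix n n ℂ) r = (r : ℂ) • (1 : Matrix n n ℂ) := by
    rw [Algebra.algebraMap_eq_smul_one]
    ext i j
    simp
  rw [e]

theorem norm_one_matrix_le : ‖(1 : Matrix n n ℂ)‖ ≤ 1 := by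
  have h := Matrix.l2_opNorm_conjTranspose_mul_self (1 : Matrix n n ℂ)
  rw [Matrix.conjTranspose_one, Matrix.one_mul] at h
  nlinarith [norm_nonneg (1 : Matrix n n ℂ)]

theorem norm_le_one_of_conjTranspose_mul_self_eq_one {R : Matrix m n ℂ} (h : Rᴴ * R = 1) :
    ‖R‖ ≤ 1 := by
  have h1 := Matrix.l2_opNorm_conjTranspose_mul_self R
  rw [h] at h1
  nlinarith [norm_nonneg R, norm_one_matrix_le (n := n)]

theorem norm_mul_isometry_le [DecidableEq m] (N : Matrix n m ℂ) {R : Matrix m n ℂ}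
    (hR : Rᴴ * R = 1) : ‖N * R‖ ≤ ‖N‖ := by
  calc ‖N * R‖ ≤ ‖N‖ * ‖R‖ := Matrix.l2_opNorm_mul _ _
    _ ≤ ‖N‖ * 1 := by gcongr; exact norm_le_one_of_conjTranspose_mul_self_eq_one hR
    _ = ‖N‖ := mul_one _

/-- A uniformly bounded positive symmetrizer gives a uniformly bounded diagonalization. -/
theorem exists_diagonalization_of_symmetrizer {P H : Matrix n n ℂ} {M : ℝ} (hM : 0 < M)
    (hHP : H * P = Pᴴ * H)
    (hlo : loewnerLE (((M⁻¹ : ℝ) : ℂ) • 1) H) (hhi : loewnerLE H ((M : ℂ) • 1)) :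
    ∃ T Tinv : Matrix n n ℂ, T * Tinv = 1 ∧ Tinv * T = 1 ∧
      matOpNorm T ≤ Real.sqrt M ∧ matOpNorm Tinv ≤ Real.sqrt M ∧
      ∃ Λ : n → ℝ, Tinv * P * T = Matrix.diagonal (fun r => (Λ r : ℂ)) := by
  unfold loewnerLE at hlo hhi
  have hpos : H.PosDef := by
    have h1 : ((((M⁻¹ : ℝ) : ℂ)) • (1 : Matrix n n ℂ)).PosDef :=
      Matrix.PosDef.one.smul (by exact_mod_cast inv_pos.2 hM)
    simpa using h1.add_posSemidef hlo
  obtain ⟨B, hB⟩ := CStarAlgebra.nonneg_iff_eq_star_mul_self.1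
    (Matrix.nonneg_iff_posSemidef.2 hpos.posSemidef)
  rw [Matrix.star_eq_conjTranspose] at hB
  have hBu : IsUnit B := by
    have h1 := hpos.isUnit
    rw [Matrix.isUnit_iff_isUnit_det, hB, Matrix.det_mul] at h1
    exact (Matrix.isUnit_iff_isUnit_det B).2 (isUnit_of_mul_isUnit_right h1)
  have hBd := (Matrix.isUnit_iff_isUnit_det B).1 hBu
  have hBi : B * B⁻¹ = 1 := Matrix.mul_nonsing_inv B hBd
  have hiB : B⁻¹ * B = 1 := Matrix.nonsing_inv_mul B hBd
  have hiBH : (B⁻¹)ᴴ * Bᴴ = 1 := by rw [← Matrix.conjTranspose_mul, hBi, conjTranspose_one]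
  have key : B * P * B⁻¹ = (B⁻¹)ᴴ * (H * P) * B⁻¹ := by
    rw [hB]
    calc B * P * B⁻¹ = ((B⁻¹)ᴴ * Bᴴ) * B * P * B⁻¹ := by rw [hiBH, Matrix.one_mul]
      _ = _ := by simp only [Matrix.mul_assoc]
  have hherm : (B * P * B⁻¹).IsHermitian := by
    have hH : (H * P)ᴴ = H * P := by
      rw [Matrix.conjTranspose_mul, hpos.isHermitian.eq, hHP]
    rw [key]
    unfold Matrix.IsHermitian
    rw [Matrix.conjTranspose_mul, Matrix.conjTranspose_mul, hH, conjTranspose_conjTranspose,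
      ← Matrix.mul_assoc]
  have hnB : ‖B‖ ≤ Real.sqrt M := by
    apply Real.le_sqrt_of_sq_le
    rw [pow_two]
    apply (posSemidef_smul_one_sub_conjTranspose_mul_self_iff B hM.le).1
    rwa [← hB]
  have hnBi : ‖B⁻¹‖ ≤ Real.sqrt M := by
    apply Real.le_sqrt_of_sq_le
    rw [pow_two]
    apply (posSemidef_smul_one_sub_conjTranspose_mul_self_iff _ hM.le).1
    have h1 := (hlo.conjTranspose_mul_mul_same B⁻¹).smul
      (show (0 : ℂ) ≤ (M : ℂ) by exact_mod_cast hM.le)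
    have h2 : (B⁻¹)ᴴ * H * B⁻¹ = 1 := by
      rw [hB, ← Matrix.mul_assoc, hiBH, Matrix.one_mul, hBi]
    have hMc : (M : ℂ) ≠ 0 := by exact_mod_cast hM.ne'
    convert h1 using 1
    rw [Matrix.mul_sub, Matrix.sub_mul, h2]
    simp [smul_sub, smul_smul, hMc]
  have hW1 : (hherm.eigenvectorUnitary : Matrix n n ℂ)ᴴ * hherm.eigenvectorUnitary = 1 :=
    Unitary.coe_star_mul_self hherm.eigenvectorUnitary
  have hW2 : (hherm.eigenvectorUnitary : Matrix n n ℂ) * (hherm.eigenvectorUnitary : Matrix n n ℂ)ᴴ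
      = 1 := Unitary.coe_mul_star_self hherm.eigenvectorUnitary
  have hspec := hherm.spectral_theorem
  rw [Unitary.conjStarAlgAut_apply, Matrix.star_eq_conjTranspose] at hspec
  set W : Matrix n n ℂ := (hherm.eigenvectorUnitary : Matrix n n ℂ) with hW
  have hnW : ‖W‖ ≤ 1 := norm_le_one_of_conjTranspose_mul_self_eq_one hW1
  have hs := Real.sqrt_nonneg M
  refine ⟨B⁻¹ * W, Wᴴ * B, ?_, ?_, ?_, ?_, hherm.eigenvalues, ?_⟩
  · calc B⁻¹ * W * (Wᴴ * B) = B⁻¹ * (W * Wᴴ) * B := by simp only [Matrix.mul_assoc]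
      _ = 1 := by rw [hW2, Matrix.mul_one, hiB]
  · calc Wᴴ * B * (B⁻¹ * W) = Wᴴ * (B * B⁻¹) * W := by simp only [Matrix.mul_assoc]
      _ = 1 := by rw [hBi, Matrix.mul_one, hW1]
  · rw [matOpNorm_eq_norm]
    calc _ ≤ ‖B⁻¹‖ * ‖W‖ := Matrix.l2_opNorm_mul _ _
      _ ≤ Real.sqrt M * 1 := by gcongr
      _ = _ := mul_one _
  · rw [matOpNorm_eq_norm]
    calc _ ≤ ‖Wᴴ‖ * ‖B‖ := Matrix.l2_opNorm_mul _ _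
      _ = ‖W‖ * ‖B‖ := by rw [Matrix.l2_opNorm_conjTranspose]
      _ ≤ 1 * Real.sqrt M := by gcongr
      _ = _ := one_mul _
  · calc Wᴴ * B * P * (B⁻¹ * W) = Wᴴ * (B * P * B⁻¹) * W := by simp only [Matrix.mul_assoc]
      _ = (Wᴴ * W) * diagonal (RCLike.ofReal ∘ hherm.eigenvalues) * (Wᴴ * W) := by
        conv_lhs => rw [hspec]
        simp only [Matrix.mul_assoc]
      _ = _ := by rw [hW1, Matrix.one_mul, Matrix.mul_one]; rfl

theorem exists_inverse_sq_sub_sq {P : Matrix n n ℂ} {p : ℝ} (hp : ‖P‖ ≤ p) :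
    ∃ G : Matrix n n ℂ, ((((p + 1 : ℝ) : ℂ) ^ 2) • 1 - P * P) * G = 1 ∧ ‖G‖ ≤ 1 := by
  have hp0 : 0 ≤ p := (norm_nonneg P).trans hp
  have hPP : ‖P * P‖ ≤ p ^ 2 :=
    (Matrix.l2_opNorm_mul P P).trans (by nlinarith [norm_nonneg P])
  set l : ℂ := ((p + 1 : ℝ) : ℂ) ^ 2 with hl
  have hln : ‖l‖ = (p + 1) ^ 2 := by
    rw [hl, norm_pow, Complex.norm_real, Real.norm_of_nonneg (by linarith)]
  have hl0 : l ≠ 0 := by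
    rw [← norm_pos_iff, hln]; positivity
  have hu : IsUnit (1 - l⁻¹ • (P * P)) := by
    apply isUnit_one_sub_of_norm_lt_one
    rw [norm_smul, norm_inv, hln, inv_mul_lt_one₀ (by positivity)]
    nlinarith
  obtain ⟨u, hu⟩ := hu
  have hG : (l • 1 - P * P) * (l⁻¹ • (↑u⁻¹ : Matrix n n ℂ)) = 1 := by
    have e : l • 1 - P * P = l • (u : Matrix n n ℂ) := by
      rw [hu, smul_sub, smul_smul, mul_inv_cancel₀ hl0, one_smul]
    rw [e, Matrix.smul_mul, Matrix.mul_smul, smul_smul, mul_inv_cancel₀ hl0, one_smul,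
      Units.mul_inv]
  refine ⟨_, hG, ?_⟩
  set G := l⁻¹ • (↑u⁻¹ : Matrix n n ℂ)
  have e : l • G = 1 + (P * P) * G := by
    rw [← hG, Matrix.sub_mul, Matrix.smul_mul, Matrix.one_mul]; abel
  have h1 : ‖l‖ * ‖G‖ ≤ 1 + p ^ 2 * ‖G‖ := by
    rw [← norm_smul, e]
    refine (norm_add_le _ _).trans (add_le_add norm_one_matrix_le ?_)
    exact (Matrix.l2_opNorm_mul _ _).trans (by gcongr)
  rw [hln] at h1
  nlinarith [norm_nonneg G]


/-- Solution of the Sylvester equation `P X - (p + 1) X E = F` when `E` acts on the right of `F`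
as an involution. -/
theorem exists_sylvester_solution [DecidableEq m] {R : Matrix m n ℂ} {P : Matrix n n ℂ}
    {F : Matrix n m ℂ} {E : Matrix m m ℂ} {p f e : ℝ} (hP : ‖P‖ ≤ p) (hF : ‖F‖ ≤ f) (hE : ‖E‖ ≤ e)
    (hFEE : F * E * E = F) (hFR : F * R = 0) (hER : E * R = 0) :
    ∃ X : Matrix n m ℂ, P * X = F + ((p + 1 : ℝ) : ℂ) • (X * E) ∧ X * R = 0 ∧
      ‖X‖ ≤ p * f + (p + 1) * (f * e) := by
  have hp : 0 ≤ p := (norm_nonneg P).trans hP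
  have hf : 0 ≤ f := (norm_nonneg F).trans hF
  have he : 0 ≤ e := (norm_nonneg E).trans hE
  obtain ⟨G, hG, hGn⟩ := exists_inverse_sq_sub_sq hP
  have hln : ‖((p + 1 : ℝ) : ℂ)‖ = p + 1 := by
    rw [Complex.norm_real, Real.norm_of_nonneg (by linarith)]
  generalize ((p + 1 : ℝ) : ℂ) = l at hG hln ⊢
  have hG' : G * (l ^ 2 • 1 - P * P) = 1 := mul_eq_one_comm.1 hG
  have hGP : G * P = P * G := by
    have hcomm : P * (l ^ 2 • 1 - P * P) = (l ^ 2 • 1 - P * P) * P := by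
      simp [Matrix.mul_sub, Matrix.sub_mul, Matrix.mul_assoc]
    calc G * P = G * (P * (l ^ 2 • 1 - P * P)) * G := by
          rw [Matrix.mul_assoc G, Matrix.mul_assoc P, hG, Matrix.mul_one]
      _ = P * G := by rw [hcomm, ← Matrix.mul_assoc, hG', Matrix.one_mul]
  refine ⟨-(G * (P * F + l • (F * E))), ?_, ?_, ?_⟩
  · have h1 : l • ((P * F + l • (F * E)) * E) - P * (P * F + l • (F * E))
        = (l ^ 2 • 1 - P * P) * F := by
      rw [Matrix.add_mul, Matrix.smul_mul, hFEE, Matrix.mul_add, Matrix.sub_mul, Matrix.smul_mul,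
        Matrix.one_mul, Matrix.mul_smul, Matrix.mul_assoc P F E, Matrix.mul_assoc P P F]
      module
    generalize P * F + l • (F * E) = Y at h1 ⊢
    have h2 : G * (l • (Y * E) - P * Y) = F := by
      rw [h1, ← Matrix.mul_assoc, hG', Matrix.one_mul]
    have h3 : l • (G * Y * E) - P * (G * Y) = F := by
      rw [← h2, Matrix.mul_sub, Matrix.mul_smul, ← Matrix.mul_assoc G P, hGP]
      simp only [Matrix.mul_assoc]
    rw [← h3, Matrix.mul_neg, Matrix.neg_mul]
    module
  · rw [Matrix.neg_mul, Matrix.mul_assoc, Matrix.add_mul, Matrix.mul_assoc P, hFR,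
      Matrix.smul_mul, Matrix.mul_assoc F, hER]
    simp
  · rw [norm_neg]
    have h1 : ‖P * F‖ ≤ p * f := (Matrix.l2_opNorm_mul _ _).trans (by gcongr)
    have h2 : ‖F * E‖ ≤ f * e := (Matrix.l2_opNorm_mul _ _).trans (by gcongr)
    have h3 : ‖P * F + l • (F * E)‖ ≤ p * f + (p + 1) * (f * e) := by
      refine (norm_add_le _ _).trans (add_le_add h1 ?_)
      rw [norm_smul, hln]
      gcongr
    calc _ ≤ ‖G‖ * ‖P * F + l • (F * E)‖ := Matrix.l2_opNorm_mul _ _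
      _ ≤ 1 * (p * f + (p + 1) * (f * e)) := by gcongr
      _ = _ := one_mul _

/-- Two-sided bounds for `Lᴴ H L + J`, where `L = Rᴴ + X` and `J` is the projection onto the
orthogonal complement of the range of the isometry `R`. -/
theorem loewner_bounds_conj_add_projection [DecidableEq m] {R : Matrix m n ℂ} {X : Matrix n m ℂ}
    {H : Matrix n n ℂ} {M c M' : ℝ} (hM : 0 < M) (hR : Rᴴ * R = 1) (hXR : X * R = 0)
    (hX : ‖X‖ ≤ c) (hL : ‖Rᴴ + X‖ ≤ c)
    (hlo : loewnerLE (((M⁻¹ : ℝ) : ℂ) • 1) H) (hhi : loewnerLE H ((M : ℂ) • 1))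
    (hM' : M' = 2 * M + 2 * c ^ 2 + 1 + M * c ^ 2) :
    loewnerLE (((M'⁻¹ : ℝ) : ℂ) • 1) ((Rᴴ + X)ᴴ * H * (Rᴴ + X) + (1 - R * Rᴴ)) ∧
      loewnerLE ((Rᴴ + X)ᴴ * H * (Rᴴ + X) + (1 - R * Rᴴ)) ((M' : ℂ) • 1) := by
  have hRLX : R * Rᴴ = ((Rᴴ + X) - X)ᴴ * ((Rᴴ + X) - X) := by
    rw [add_sub_cancel_right, conjTranspose_conjTranspose]
  generalize Rᴴ + X = L at hL hRLX ⊢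
  obtain ⟨J, hJ⟩ : ∃ J, J = 1 - R * Rᴴ := ⟨_, rfl⟩
  have hJh : Jᴴ = J := by simp [hJ]
  have hJJ : J * J = J := by
    rw [hJ, Matrix.mul_sub, Matrix.mul_one, Matrix.sub_mul, Matrix.one_mul, Matrix.mul_assoc R,
      ← Matrix.mul_assoc Rᴴ, hR, Matrix.one_mul, sub_self, sub_zero]
  have hXJ : X * J = X := by
    rw [hJ, Matrix.mul_sub, Matrix.mul_one, ← Matrix.mul_assoc, hXR, Matrix.zero_mul, sub_zero]
  have e1 : (1 : Matrix m m ℂ) = (L - X)ᴴ * (L - X) + J := by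
    rw [← hRLX, hJ]; abel
  have hRR : (1 - J).PosSemidef := by
    rw [hJ, sub_sub_cancel]; exact Matrix.posSemidef_self_mul_conjTranspose R
  rw [← hJ]
  clear hJ hRLX
  have hJpos : J.PosSemidef := by
    have := Matrix.posSemidef_conjTranspose_mul_self J
    rwa [hJh, hJJ] at this
  have hXpos : (((c ^ 2 : ℝ) : ℂ) • J - Xᴴ * X).PosSemidef := by
    have h1 := (posSemidef_smul_one_sub_conjTranspose_mul_self_iff X (sq_nonneg c)).2
      (by nlinarith [norm_nonneg X])
    have h2 := h1.conjTranspose_mul_mul_same J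
    have e : J * (Xᴴ * X) * J = Xᴴ * X := by
      conv_rhs => rw [← hXJ, conjTranspose_mul, hJh]
      simp only [Matrix.mul_assoc]
    rwa [hJh, Matrix.mul_sub, Matrix.sub_mul, e, Matrix.mul_smul, Matrix.smul_mul,
      Matrix.mul_one, hJJ] at h2
  have hLpos : (((c ^ 2 : ℝ) : ℂ) • 1 - Lᴴ * L).PosSemidef :=
    (posSemidef_smul_one_sub_conjTranspose_mul_self_iff L (sq_nonneg c)).2
      (by nlinarith [norm_nonneg L])
  have hLL : (Lᴴ * L).PosSemidef := Matrix.posSemidef_conjTranspose_mul_self L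
  have hLX : ((L + X)ᴴ * (L + X)).PosSemidef := Matrix.posSemidef_conjTranspose_mul_self _
  have hM'pos : 0 < M' := by rw [hM']; positivity
  have hI : M'⁻¹ * M' = 1 := inv_mul_cancel₀ hM'pos.ne'
  have hδ : 0 ≤ M'⁻¹ := inv_nonneg.2 hM'pos.le
  constructor
  · have h1 := hlo.conjTranspose_mul_mul_same L
    have hM2 : 2 * M'⁻¹ ≤ M⁻¹ := by
      have h4 : M⁻¹ * M = 1 := inv_mul_cancel₀ hM.ne'
      have h5 : 2 * M ≤ M' := by rw [hM']; nlinarith [sq_nonneg c, mul_nonneg hM.le (sq_nonneg c)]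
      have h6 : M'⁻¹ * (2 * M) ≤ 1 := by rw [← hI]; gcongr
      have h7 : 2 * M'⁻¹ * M ≤ M⁻¹ * M := by linarith
      exact le_of_mul_le_mul_right h7 hM
    have hc2 : 0 ≤ 1 - M'⁻¹ * (2 * c ^ 2 + 1) := by
      have h5 : 2 * c ^ 2 + 1 ≤ M' := by rw [hM']; nlinarith [mul_nonneg hM.le (sq_nonneg c)]
      have h6 : M'⁻¹ * (2 * c ^ 2 + 1) ≤ 1 := (mul_le_mul_of_nonneg_left h5 hδ).trans_eq hI
      linarith
    have hsum := (((h1.add (posSemidef_ofReal_smul (sub_nonneg.2 hM2) hLL)).add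
      (posSemidef_ofReal_smul hc2 hJpos)).add (posSemidef_ofReal_smul hδ hLX)).add
      (posSemidef_ofReal_smul (mul_nonneg zero_le_two hδ) hXpos)
    unfold loewnerLE
    convert hsum using 1
    have e2 : ((M'⁻¹ : ℝ) : ℂ) • (1 : Matrix m m ℂ)
        = ((M'⁻¹ : ℝ) : ℂ) • ((L - X)ᴴ * (L - X) + J) := by rw [← e1]
    rw [e2]
    simp only [conjTranspose_sub, conjTranspose_add, Matrix.mul_sub, Matrix.sub_mul,
      Matrix.mul_add, Matrix.add_mul, Matrix.mul_smul, Matrix.smul_mul, Matrix.mul_one]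
    clear * -
    generalize M'⁻¹ = a
    generalize M⁻¹ = b
    push_cast
    module
  · have h1 := hhi.conjTranspose_mul_mul_same L
    have h3 : 0 ≤ M' - M * c ^ 2 - 1 := by rw [hM']; nlinarith [sq_nonneg c]
    have hsum := ((h1.add (posSemidef_ofReal_smul hM.le hLpos)).add hRR).add
      (posSemidef_ofReal_smul h3 (Matrix.PosSemidef.one (n := m)))
    unfold loewnerLE
    convert hsum using 1
    simp only [Matrix.mul_sub, Matrix.sub_mul, Matrix.mul_smul, Matrix.smul_mul, Matrix.mul_one]
    clear * -
    push_cast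
    module

/-- A bounded symmetrizer of `R N + λ E` built from a bounded symmetrizer of the compressed
symbol `N R`, where `R` is an isometry and the Hermitian matrix `E` vanishes on its range. -/
theorem exists_symmetrizer_of_compression [DecidableEq m] {R : Matrix m n ℂ} {N : Matrix n m ℂ}
    {E : Matrix m m ℂ} {C M : ℝ} (hM : 0 < M) (hN : ‖N‖ ≤ C) (hE : ‖E‖ ≤ C)
    (hR : Rᴴ * R = 1) (hEh : Eᴴ = E) (hER : E * R = 0)
    (hNE : N * E * E = N * (1 - R * Rᴴ)) {H : Matrix n n ℂ}
    (hHh : H.IsHermitian) (hHP : H * (N * R) = (N * R)ᴴ * H)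
    (hlo : loewnerLE (((M⁻¹ : ℝ) : ℂ) • 1) H) (hhi : loewnerLE H ((M : ℂ) • 1))
    {M' c : ℝ} (hc : c = 1 + (C * (2 * C) + (C + 1) * (2 * C * C)))
    (hM' : M' = 2 * M + 2 * c ^ 2 + 1 + M * c ^ 2) :
    ∃ H2 : Matrix m m ℂ, H2.IsHermitian ∧
      H2 * (R * N + ((C + 1 : ℝ) : ℂ) • E) = (R * N + ((C + 1 : ℝ) : ℂ) • E)ᴴ * H2 ∧
      loewnerLE (((M'⁻¹ : ℝ) : ℂ) • 1) H2 ∧ loewnerLE H2 ((M' : ℂ) • 1) := by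
  have hC : 0 ≤ C := (norm_nonneg N).trans hN
  have hRn := norm_le_one_of_conjTranspose_mul_self_eq_one hR
  have hRE : Rᴴ * E = 0 := by
    have := congrArg conjTranspose hER
    rwa [conjTranspose_mul, hEh, conjTranspose_zero] at this
  obtain ⟨P, hP⟩ : ∃ P, P = N * R := ⟨_, rfl⟩
  rw [← hP] at hHP
  have hPn : ‖P‖ ≤ C := hP ▸ (norm_mul_isometry_le N hR).trans hN
  have hFE : (N - P * Rᴴ) * E = N * E := by
    rw [Matrix.sub_mul, Matrix.mul_assoc P, hRE, Matrix.mul_zero, sub_zero]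
  have hFEE : (N - P * Rᴴ) * E * E = N - P * Rᴴ := by
    rw [hFE, hNE, hP, Matrix.mul_sub, Matrix.mul_one, Matrix.mul_assoc]
  have hFR : (N - P * Rᴴ) * R = 0 := by
    rw [Matrix.sub_mul, Matrix.mul_assoc P, hR, Matrix.mul_one, hP, sub_self]
  have hFn : ‖N - P * Rᴴ‖ ≤ 2 * C := by
    calc ‖N - P * Rᴴ‖ ≤ ‖N‖ + ‖P * Rᴴ‖ := norm_sub_le _ _
      _ ≤ C + ‖P‖ * ‖Rᴴ‖ := add_le_add hN (Matrix.l2_opNorm_mul _ _)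
      _ ≤ C + C * 1 := by rw [Matrix.l2_opNorm_conjTranspose]; gcongr
      _ = 2 * C := by ring
  obtain ⟨X, hSyl, hXR, hXn⟩ := exists_sylvester_solution hPn hFn hE hFEE hFR hER
  have hLn : ‖Rᴴ + X‖ ≤ c := by
    rw [hc]
    refine (norm_add_le _ _).trans (add_le_add ?_ hXn)
    rwa [Matrix.l2_opNorm_conjTranspose]
  obtain ⟨hb1, hb2⟩ := loewner_bounds_conj_add_projection hM hR hXR
    (hXn.trans (by rw [hc]; linarith)) hLn hlo hhi hM'
  refine ⟨_, ?_, ?_, hb1, hb2⟩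
  · exact (Matrix.isHermitian_conjTranspose_mul_mul _ hHh).add
      (Matrix.isHermitian_one.sub (Matrix.isHermitian_mul_conjTranspose_self R))
  clear hb1 hb2
  have hlc : star (((C + 1 : ℝ) : ℂ)) = ((C + 1 : ℝ) : ℂ) := Complex.conj_ofReal _
  generalize ((C + 1 : ℝ) : ℂ) = l at *
  have hLQ : (Rᴴ + X) * (R * N + l • E) = P * (Rᴴ + X) := by
    have e1 : (Rᴴ + X) * (R * N + l • E) = N + l • (X * E) := by
      rw [Matrix.add_mul, Matrix.mul_add, Matrix.mul_add, ← Matrix.mul_assoc Rᴴ, hR,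
        ← Matrix.mul_assoc X, hXR, Matrix.mul_smul, hRE]
      simp
    rw [e1, Matrix.mul_add, hSyl]
    abel
  have hJQ : (1 - R * Rᴴ) * (R * N + l • E) = l • E := by
    rw [Matrix.sub_mul, Matrix.one_mul, Matrix.mul_assoc R, Matrix.mul_add,
      ← Matrix.mul_assoc Rᴴ, hR, Matrix.one_mul, Matrix.mul_smul, hRE, smul_zero, add_zero]
    abel
  have hJh : (1 - R * Rᴴ)ᴴ = 1 - R * Rᴴ := by simp
  generalize 1 - R * Rᴴ = J at *
  generalize R * N + l • E = Q at *
  generalize Rᴴ + X = L at *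
  have hA : Lᴴ * H * L * Q = Qᴴ * (Lᴴ * H * L) := by
    have hLQ' : Qᴴ * Lᴴ = Lᴴ * Pᴴ := by
      rw [← conjTranspose_mul, hLQ, conjTranspose_mul]
    calc Lᴴ * H * L * Q = Lᴴ * (H * P) * L := by
          rw [Matrix.mul_assoc _ L Q, hLQ]; simp only [Matrix.mul_assoc]
      _ = Lᴴ * Pᴴ * (H * L) := by rw [hHP]; simp only [Matrix.mul_assoc]
      _ = Qᴴ * (Lᴴ * H * L) := by rw [← hLQ']; simp only [Matrix.mul_assoc]
  have hB : Qᴴ * J = l • E := by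
    have := congrArg conjTranspose hJQ
    rwa [conjTranspose_mul, hJh, conjTranspose_smul, hEh, hlc] at this
  rw [Matrix.add_mul, Matrix.mul_add, hA, hJQ, hB]

end SpectralNorm

/-- The isometry `(u, v, w) ↦ (0, s_a u, v, w)`. -/
noncomputable def longitudinalEmbedding (nu nv nw : ℕ) (s : Fin 3 → ℝ) :
    Matrix (I2 nu nv nw) (I3 nu nv nw) ℂ :=
  Matrix.of fun r c =>
    match r, c with
    | Sum.inl _, _ => 0
    | Sum.inr (Sum.inl (a, m)), Sum.inl m' => if m = m' then (s a : ℂ) else 0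
    | Sum.inr (Sum.inl _), Sum.inr _ => 0
    | Sum.inr (Sum.inr _), Sum.inl _ => 0
    | Sum.inr (Sum.inr x), Sum.inr y => if x = y then 1 else 0

/-- The rows of the reduced symbol paired with the unknowns `(s^a d_a, v, w)`. -/
noncomputable def longitudinalSymbol (s : Fin 3 → ℝ) : Matrix (I3 nu nv nw) (I2 nu nv nw) ℂ :=
  Matrix.of fun r c =>
    match r, c with
    | _, Sum.inl _ => 0
    | Sum.inl m, Sum.inr (Sum.inl (b, m')) => Auu b m m'
    | Sum.inl m, Sum.inr (Sum.inr (Sum.inl q)) => Auv m q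
    | Sum.inl _, Sum.inr (Sum.inr (Sum.inr _)) => 0
    | Sum.inr (Sum.inl p), Sum.inr (Sum.inl (b, m')) => ∑ i, (s i : ℂ) * Avu i b p m'
    | Sum.inr (Sum.inl p), Sum.inr (Sum.inr (Sum.inl q)) => ∑ i, (s i : ℂ) * Avv i p q
    | Sum.inr (Sum.inl p), Sum.inr (Sum.inr (Sum.inr t)) => Avw p t
    | Sum.inr (Sum.inr t), Sum.inr (Sum.inl (b, m')) =>
        ∑ i, ∑ j, (s i : ℂ) * (s j : ℂ) * Awu i j b t m'
    | Sum.inr (Sum.inr t), Sum.inr (Sum.inr (Sum.inl q)) =>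
        ∑ i, ∑ j, (s i : ℂ) * (s j : ℂ) * Awv i j t q
    | Sum.inr (Sum.inr t), Sum.inr (Sum.inr (Sum.inr t')) => ∑ i, (s i : ℂ) * Aww i t t'

/-- The Hermitian matrix `d_a ↦ i ε_a^{jb} s_j d_b` on the reduction variables. -/
noncomputable def transverseRotation (nu nv nw : ℕ) (s : Fin 3 → ℝ) : Matrix (I2 nu nv nw) (I2 nu nv nw) ℂ :=
  Matrix.of fun r c =>
    match r, c with
    | Sum.inr (Sum.inl (a, m)), Sum.inr (Sum.inl (b, m')) =>
        if m = m' then Complex.I * ∑ i, (s i : ℂ) * (lev a i b : ℂ) else 0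
    | _, _ => 0

section Symbols

theorem longitudinalEmbedding_conjTranspose_mul_self {s : Fin 3 → ℝ} (hs : ∑ i, s i ^ 2 = 1) :
    (longitudinalEmbedding nu nv nw s)ᴴ * longitudinalEmbedding nu nv nw s
      = 1 := by
  have hs' : (s 0 : ℂ) * s 0 + s 1 * s 1 + s 2 * s 2 = 1 := by
    rw [Fin.sum_univ_three] at hs
    exact_mod_cast (by linarith : s 0 * s 0 + s 1 * s 1 + s 2 * s 2 = 1)
  ext r c
  rcases r with m | p | t <;> rcases c with m' | q | t' <;>
    simp [Matrix.mul_apply, longitudinalEmbedding, Fintype.sum_sum_type, Fintype.sum_prod_type,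
      Matrix.one_apply, apply_ite]
  · by_cases h : m = m'
    · subst h
      simpa [Fin.sum_univ_three] using hs'
    · simp [h, Ne.symm h]
  · split_ifs with h <;> simp [h, eq_comm]
  · split_ifs with h <;> simp [h, eq_comm]

theorem transverseRotation_isHermitian (s : Fin 3 → ℝ) :
    (transverseRotation nu nv nw s)ᴴ = transverseRotation nu nv nw s := by
  ext r c
  rcases r with m | ⟨a, m⟩ | p | t <;> rcases c with m' | ⟨b, m'⟩ | q | t' <;>
    simp [transverseRotation, Matrix.conjTranspose_apply]
  by_cases h : m = m'
  · subst h
    fin_cases a <;> fin_cases b <;> simp [Fin.sum_univ_three, lev]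
  · simp [h, Ne.symm h]

theorem transverseRotation_mul_longitudinalEmbedding (s : Fin 3 → ℝ) :
    transverseRotation nu nv nw s * longitudinalEmbedding nu nv nw s
      = 0 := by
  ext r c
  rcases r with m | ⟨a, m⟩ | p | t <;> rcases c with m' | q | t' <;>
    simp [Matrix.mul_apply, transverseRotation, longitudinalEmbedding, Fintype.sum_sum_type,
      Fintype.sum_prod_type]
  by_cases h : m = m'
  · subst h
    fin_cases a <;> simp [Fin.sum_univ_three, lev] <;> ring
  · simp [h]

theorem longitudinalSymbol_mul_longitudinalEmbedding (s : Fin 3 → ℝ) :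
    longitudinalSymbol Auu Auv Avu Avv Avw Awu Awv Aww s * longitudinalEmbedding nu nv nw s
      = P3 Auu Auv Avu Avv Avw Awu Awv Aww s := by
  ext r c
  rcases r with m | p | t <;> rcases c with m' | q | t' <;>
    simp [Matrix.mul_apply, longitudinalSymbol, longitudinalEmbedding, P3, Fintype.sum_sum_type,
      Fintype.sum_prod_type]
  all_goals
    simp only [Fin.sum_univ_three]
    ring

theorem longitudinalSymbol_mul_transverseRotation_sq {s : Fin 3 → ℝ} (hs : ∑ i, s i ^ 2 = 1) :
    longitudinalSymbol Auu Auv Avu Avv Avw Awu Awv Aww s * transverseRotation nu nv nw s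
        * transverseRotation nu nv nw s
      = longitudinalSymbol Auu Auv Avu Avv Avw Awu Awv Aww s
        * (1 - longitudinalEmbedding nu nv nw s * (longitudinalEmbedding nu nv nw s)ᴴ) := by
  have hE : ∀ r c, (transverseRotation nu nv nw s * transverseRotation nu nv nw s :
      Matrix (I2 nu nv nw) (I2 nu nv nw) ℂ) (Sum.inr r) c
      = (1 - longitudinalEmbedding nu nv nw s * (longitudinalEmbedding nu nv nw s)ᴴ :
          Matrix (I2 nu nv nw) (I2 nu nv nw) ℂ) (Sum.inr r) c := by
    have hs' : (s 0 : ℂ) * s 0 + s 1 * s 1 + s 2 * s 2 = 1 := by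
      rw [Fin.sum_univ_three] at hs
      exact_mod_cast (by linarith : s 0 * s 0 + s 1 * s 1 + s 2 * s 2 = 1)
    intro r c
    rcases r with ⟨a, m⟩ | p | t <;> rcases c with m' | ⟨b, m'⟩ | q | t' <;>
      simp [Matrix.mul_apply, transverseRotation, longitudinalEmbedding, Fintype.sum_sum_type,
        Fintype.sum_prod_type, Matrix.one_apply]
    · by_cases h : m = m'
      · subst h
        fin_cases a <;> fin_cases b <;> simp [Fin.sum_univ_three, lev] <;> ring_nf <;>
          simp only [Complex.I_sq] <;> first | ring1 | linear_combination hs'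
      · simp [h, Ne.symm h]
  rw [Matrix.mul_assoc]
  ext r c
  rw [Matrix.mul_apply, Matrix.mul_apply, Fintype.sum_sum_type, Fintype.sum_sum_type]
  simp only [hE]
  simp [longitudinalSymbol]

theorem P2_eq_longitudinal_add_transverse (lam : ℝ) (s : Fin 3 → ℝ) :
    P2 Auu Auv Bu1u Avu Avv Avw Bv1u Awu Awv Aww Bw1u
        (fun j => -Auu j) (fun _ _ => 0) (fun a j => if a = j then -Bu1u else 0)
        (fun a j b => (Complex.I * (lam : ℂ) * (lev a j b : ℂ)) • (1 : Matrix (Fin nu) (Fin nu) ℂ))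
        (fun j => -Bv1u j) (fun _ _ => 0) (fun p j => -Bw1u p j) (fun _ _ _ => 0) s
      = longitudinalEmbedding nu nv nw s * longitudinalSymbol Auu Auv Avu Avv Avw Awu Awv Aww s
        + (lam : ℂ) • transverseRotation nu nv nw s := by
  ext r c
  rcases r with m | ⟨a, m⟩ | p | t <;> rcases c with m' | ⟨b, m'⟩ | q | t' <;>
    simp [P2, Matrix.mul_apply, longitudinalSymbol, transverseRotation, longitudinalEmbedding,
      Fintype.sum_sum_type]
  · refine Finset.sum_eq_zero fun i _ => ?_
    split_ifs <;> simp
  · by_cases h : m = m'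
    · subst h
      fin_cases a <;> simp [Fin.sum_univ_three] <;> ring
    · fin_cases a <;> simp [Fin.sum_univ_three, h]

end Symbols

section UniformBounds

open scoped Matrix.Norms.L2Operator

theorem exists_norm_le_on_unit_sphere {m n : Type*} [Fintype m] [Fintype n] [DecidableEq n]
    {A : (Fin 3 → ℝ) → Matrix m n ℂ} (hA : ∀ i j, Continuous fun s => A s i j) :
    ∃ C : ℝ, ∀ s : Fin 3 → ℝ, ∑ i, s i ^ 2 = 1 → ‖A s‖ ≤ C := by
  have hK : IsCompact {s : Fin 3 → ℝ | ∑ i, s i ^ 2 = 1} := by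
    refine Metric.isCompact_of_isClosed_isBounded (isClosed_eq (by fun_prop) continuous_const) ?_
    refine (Metric.isBounded_closedBall (x := (0 : Fin 3 → ℝ)) (r := 1)).subset fun s hs => ?_
    rw [mem_closedBall_zero_iff, pi_norm_le_iff_of_nonneg zero_le_one]
    intro i
    have h1 : s i ^ 2 ≤ ∑ i, s i ^ 2 :=
      Finset.single_le_sum (f := fun i => s i ^ 2) (fun j _ => sq_nonneg _) (Finset.mem_univ i)
    rw [Set.mem_ofPred_eq] at hs
    rw [hs] at h1
    exact abs_le_one_iff_mul_self_le_one.2 (by nlinarith)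
  have hc : Continuous A := continuous_matrix hA
  obtain ⟨C, hC⟩ := hK.exists_bound_of_continuousOn hc.continuousOn
  exact ⟨C, hC⟩

theorem exists_longitudinalSymbol_norm_le :
    ∃ C : ℝ, ∀ s : Fin 3 → ℝ, ∑ i, s i ^ 2 = 1 →
      ‖longitudinalSymbol Auu Auv Avu Avv Avw Awu Awv Aww s‖ ≤ C := by
  apply exists_norm_le_on_unit_sphere
  intro r c
  rcases r with m | p | t <;> rcases c with m' | ⟨b, m'⟩ | q | t' <;>
    simp only [longitudinalSymbol, Matrix.of_apply] <;> fun_prop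

theorem exists_transverseRotation_norm_le :
    ∃ C : ℝ, ∀ s : Fin 3 → ℝ, ∑ i, s i ^ 2 = 1 →
      ‖transverseRotation nu nv nw s‖ ≤ C := by
  apply exists_norm_le_on_unit_sphere
  intro r c
  rcases r with m | ⟨a, m⟩ | p | t <;> rcases c with m' | ⟨b, m'⟩ | q | t' <;>
    simp only [transverseRotation, Matrix.of_apply] <;> try fun_prop
  split_ifs <;> fun_prop

end UniformBounds

/-- FT3S strong hyperbolicity implies the existence of a strongly hyperbolic
FT2S reduction; one may take the partial choice `D^u = -A^u_u`, `D_a{}^j = -B^u_{1u}δ_a^j`,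
`D^v = -B^v_{1u}`, `D^w = -B^w_{1u}`, `D̄^u = D̄^v = D̄^w = 0` and
`D̄_a{}^{jb} = iλ ε_a{}^{jb}` with `λ` larger than the operator norm of `P₃(s)` for every
unit `s`; then `P₂(s)` is uniformly diagonalizable with real eigenvalues.  In particular
the system is FT2S strongly hyperbolic. -/
theorem stmt_1
    (M3 : ℝ) (hM3 : 0 < M3)
    (H3 : (Fin 3 → ℝ) → Matrix (I3 nu nv nw) (I3 nu nv nw) ℂ)
    (hH3 : ∀ s : Fin 3 → ℝ, (∑ i, s i ^ 2) = 1 →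
      (H3 s).IsHermitian ∧
      H3 s * P3 Auu Auv Avu Avv Avw Awu Awv Aww s
        = (P3 Auu Auv Avu Avv Avw Awu Awv Aww s)ᴴ * H3 s ∧
      loewnerLE (((M3⁻¹ : ℝ) : ℂ) • 1) (H3 s) ∧
      loewnerLE (H3 s) (((M3 : ℝ) : ℂ) • 1)) :
    ∃ lam : ℝ,
      (∀ s : Fin 3 → ℝ, (∑ i, s i ^ 2) = 1 →
        matOpNorm (P3 Auu Auv Avu Avv Avw Awu Awv Aww s) < lam) ∧
      ∃ K : ℝ, 0 < K ∧
        (∀ s : Fin 3 → ℝ, (∑ i, s i ^ 2) = 1 →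
          ∃ T Tinv : Matrix (I2 nu nv nw) (I2 nu nv nw) ℂ,
            T * Tinv = 1 ∧ Tinv * T = 1 ∧ matOpNorm T ≤ K ∧ matOpNorm Tinv ≤ K ∧
            ∃ Λ : I2 nu nv nw → ℝ,
              Tinv *
                  P2 Auu Auv Bu1u Avu Avv Avw Bv1u Awu Awv Aww Bw1u
                    (fun j => -Auu j)
                    (fun _ _ => 0)
                    (fun a j => if a = j then -Bu1u else 0)
                    (fun a j b =>
                      (Complex.I * (lam : ℂ) * (lev a j b : ℂ)) •
                        (1 : Matrix (Fin nu) (Fin nu) ℂ))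
                    (fun j => -Bv1u j)
                    (fun _ _ => 0)
                    (fun p j => -Bw1u p j)
                    (fun _ _ _ => 0) s * T
                = Matrix.diagonal (fun r => (Λ r : ℂ))) ∧
        (∃ M2 : ℝ, 0 < M2 ∧ ∀ s : Fin 3 → ℝ, (∑ i, s i ^ 2) = 1 →
          ∃ H2 : Matrix (I2 nu nv nw) (I2 nu nv nw) ℂ,
            H2.IsHermitian ∧
            H2 * P2 Auu Auv Bu1u Avu Avv Avw Bv1u Awu Awv Aww Bw1u
                (fun j => -Auu j) (fun _ _ => 0)
                (fun a j => if a = j then -Bu1u else 0)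
                (fun a j b =>
                  (Complex.I * (lam : ℂ) * (lev a j b : ℂ)) •
                    (1 : Matrix (Fin nu) (Fin nu) ℂ))
                (fun j => -Bv1u j) (fun _ _ => 0) (fun p j => -Bw1u p j)
                (fun _ _ _ => 0) s
              = (P2 Auu Auv Bu1u Avu Avv Avw Bv1u Awu Awv Aww Bw1u
                  (fun j => -Auu j) (fun _ _ => 0)
                  (fun a j => if a = j then -Bu1u else 0)
                  (fun a j b =>
                    (Complex.I * (lam : ℂ) * (lev a j b : ℂ)) •
                      (1 : Matrix (Fin nu) (Fin nu) ℂ))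
                  (fun j => -Bv1u j) (fun _ _ => 0) (fun p j => -Bw1u p j)
                  (fun _ _ _ => 0) s)ᴴ * H2 ∧
            loewnerLE (((M2⁻¹ : ℝ) : ℂ) • 1) H2 ∧
            loewnerLE H2 (((M2 : ℝ) : ℂ) • 1)) := by
  obtain ⟨C₁, hC₁⟩ := exists_longitudinalSymbol_norm_le Auu Auv Avu Avv Avw Awu Awv Aww
  obtain ⟨C₂, hC₂⟩ := exists_transverseRotation_norm_le (nu := nu) (nv := nv) (nw := nw)
  obtain ⟨C, hC⟩ : ∃ C, C = max C₁ C₂ := ⟨_, rfl⟩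
  obtain ⟨c, hc⟩ : ∃ c, c = 1 + (C * (2 * C) + (C + 1) * (2 * C * C)) := ⟨_, rfl⟩
  obtain ⟨M2, hM2⟩ : ∃ M2, M2 = 2 * M3 + 2 * c ^ 2 + 1 + M3 * c ^ 2 := ⟨_, rfl⟩
  have hM2pos : 0 < M2 := by rw [hM2]; positivity
  have hN : ∀ s : Fin 3 → ℝ, ∑ i, s i ^ 2 = 1 →
      matOpNorm (P3 Auu Auv Avu Avv Avw Awu Awv Aww s) ≤ C := by
    intro s hs
    rw [← longitudinalSymbol_mul_longitudinalEmbedding, hC]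
    exact (norm_mul_isometry_le _ (longitudinalEmbedding_conjTranspose_mul_self hs)).trans
      ((hC₁ s hs).trans (le_max_left _ _))
  simp only [P2_eq_longitudinal_add_transverse]
  have hsymm : ∀ s : Fin 3 → ℝ, ∑ i, s i ^ 2 = 1 → _ := fun s hs =>
    have h := hH3 s hs
    exists_symmetrizer_of_compression hM3 ((hC₁ s hs).trans (hC ▸ le_max_left _ _))
      ((hC₂ s hs).trans (hC ▸ le_max_right _ _))
      (longitudinalEmbedding_conjTranspose_mul_self hs) (transverseRotation_isHermitian s)
      (transverseRotation_mul_longitudinalEmbedding s)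
      (longitudinalSymbol_mul_transverseRotation_sq Auu Auv Avu Avv Avw Awu Awv Aww hs) h.1
      (by rw [longitudinalSymbol_mul_longitudinalEmbedding]; exact h.2.1) h.2.2.1 h.2.2.2 hc hM2
  refine ⟨C + 1, fun s hs => (hN s hs).trans_lt (lt_add_one C), Real.sqrt M2,
    Real.sqrt_pos.2 hM2pos, fun s hs => ?_, M2, hM2pos, hsymm⟩
  obtain ⟨H2, -, h1, h2, h3⟩ := hsymm s hs
  exact exists_diagonalization_of_symmetrizer hM2pos h1 h2 h3
end

section
/- For every N >= 2: if an FTNS system is first-order symmetric hyperbolic, then it is FTNS symmetric hyperbolic. Precisely: if for some admissible reduction parameters D^p there is a constant Hermitian positive-definite H1 on the first-order state space with H1 A1^p Hermitian for every p in {1,2,3}, then the diagonal block H22 of H1 corresponding to the top-level variables (d^0, d^1, ..., d^{N-2}, v^{N-1}) is an FTNS symmetrizer: H22 is Hermitian, positive definite on W_N, and (iota_s* H22 iota_s) P_N(s) is Hermitian for every unit s in R^3. -/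
open Matrix

/-- Index type for the FTNS state `(v⁰, …, v^{N-1})`. -/
abbrev IN (N : ℕ) (n : ℕ → ℕ) : Type := Σ μ : Fin N, Fin (n μ)

/-- Index type for the reduction variables `(d^μ_ν)_{i₁…i_ν}` (`μ ≤ N-2`,
`1 ≤ ν ≤ N-μ-1`), with tensor indices written out in full. -/
abbrev ID (N : ℕ) (n : ℕ → ℕ) : Type :=
  Σ μ : Fin (N - 1), Σ ν : Fin (N - 1 - (μ : ℕ)), ((Fin ((ν : ℕ) + 1) → Fin 3) × Fin (n μ))

/-- Index type for the full first-order state. -/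
abbrev I1N (N : ℕ) (n : ℕ → ℕ) : Type := IN N n ⊕ ID N n

/-- Index type for `W_N = ⊕_μ Sym^{N-μ-1}(ℂ³) ⊗ ℂ^{n_μ}` (tensor indices written in
full; `W_N` consists of the vectors symmetric in the tensor indices). -/
abbrev IWN (N : ℕ) (n : ℕ → ℕ) : Type :=
  Σ μ : Fin N, ((Fin (N - 1 - (μ : ℕ)) → Fin 3) × Fin (n μ))

variable (N : ℕ) (n : ℕ → ℕ)
  (A : (μ ν : ℕ) → (Fin (μ - ν + 1) → Fin 3) → Matrix (Fin (n μ)) (Fin (n ν)) ℂ)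
  (A' : (μ : ℕ) → Matrix (Fin (n μ)) (Fin (n (μ + 1))) ℂ)

/-- The FTNS principal symbol `P_N(s)`. -/
noncomputable def PN (s : Fin 3 → ℝ) : Matrix (IN N n) (IN N n) ℂ :=
  Matrix.of fun r c =>
    if h1 : (c.1 : ℕ) ≤ (r.1 : ℕ) then
      ∑ k : Fin ((r.1 : ℕ) - (c.1 : ℕ) + 1) → Fin 3,
        (∏ t, (s (k t) : ℂ)) * A r.1 c.1 k r.2 c.2
    else if h2 : (c.1 : ℕ) = (r.1 : ℕ) + 1 then
      A' r.1 r.2 (Fin.cast (congrArg n h2) c.2)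
    else 0

/-- The principal matrices `A₀^p` of the direct first-order reduction (without the
reduction-parameter additions): nonzero blocks only in the rows of the top-level
variables `d^μ` (`μ ≤ N-2`) and of `v^{N-1}`, built from the symmetrized
`Δ`-contractions of the `A^μ_ν`. -/
noncomputable def A0N (p : Fin 3) : Matrix (I1N N n) (I1N N n) ℂ :=
  Matrix.of fun r c =>
    match r, c with
    | Sum.inl ⟨μr, m⟩, Sum.inl ⟨νc, q⟩ =>
        if h : (μr : ℕ) = N - 1 ∧ (νc : ℕ) = N - 1 then
          A (N - 1) (N - 1) (fun _ => p)
            (Fin.cast (congrArg n h.1) m) (Fin.cast (congrArg n h.2) q)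
        else 0
    | Sum.inl ⟨μr, m⟩, Sum.inr ⟨μc, νc, j, b⟩ =>
        if h : (μr : ℕ) = N - 1 ∧ (νc : ℕ) + 1 = N - 1 - (μc : ℕ) then
          A (N - 1) μc
            (fun t : Fin ((N - 1) - (μc : ℕ) + 1) =>
              if h0 : (t : ℕ) = 0 then p
              else j ⟨(t : ℕ) - 1, by
                obtain ⟨h1, h2⟩ := h; have := t.isLt; omega⟩)
            (Fin.cast (congrArg n h.1) m) b
        else 0
    | Sum.inr ⟨μr, νr, i, m⟩, Sum.inl ⟨νc, q⟩ =>
        if h : (νr : ℕ) + 1 = N - 1 - (μr : ℕ) ∧ (νc : ℕ) = N - 1 ∧ (μr : ℕ) + 1 = N - 1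
        then
          (if i ⟨0, Nat.succ_pos _⟩ = p then 1 else 0) *
            A' μr m
              (Fin.cast (congrArg n (show (νc : ℕ) = (μr : ℕ) + 1 by
                obtain ⟨h1, h2, h3⟩ := h; omega)) q)
        else 0
    | Sum.inr ⟨μr, νr, i, m⟩, Sum.inr ⟨μc, νc, j, b⟩ =>
        if h : (νr : ℕ) + 1 = N - 1 - (μr : ℕ) ∧ (νc : ℕ) + 1 = N - 1 - (μc : ℕ) ∧
            (μc : ℕ) ≤ (μr : ℕ) + 1 then
          ((Nat.factorial ((νc : ℕ) + 2) : ℂ) * (Nat.factorial ((νr : ℕ) + 1) : ℂ))⁻¹ *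
            ∑ σ : Equiv.Perm (Fin ((νc : ℕ) + 2)), ∑ τ : Equiv.Perm (Fin ((νr : ℕ) + 1)),
              (∏ t : Fin ((νr : ℕ) + 1),
                (if i (τ t) =
                    (fun u : Fin ((νc : ℕ) + 2) =>
                      if h0 : (u : ℕ) = 0 then p
                      else j ⟨(u : ℕ) - 1, by have := u.isLt; omega⟩)
                      (σ ⟨(t : ℕ), by
                        obtain ⟨h1, h2, h3⟩ := h; have := t.isLt
                        have := μr.isLt; have := μc.isLt; omega⟩)
                  then 1 else 0 : ℂ)) *
              (if hA : (μc : ℕ) ≤ (μr : ℕ) then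
                A μr μc
                  (fun t' : Fin ((μr : ℕ) - (μc : ℕ) + 1) =>
                    (fun u : Fin ((νc : ℕ) + 2) =>
                      if h0 : (u : ℕ) = 0 then p
                      else j ⟨(u : ℕ) - 1, by have := u.isLt; omega⟩)
                      (σ ⟨(νr : ℕ) + 1 + (t' : ℕ), by
                        obtain ⟨h1, h2, h3⟩ := h; have := t'.isLt
                        have := μr.isLt; have := μc.isLt; omega⟩))
                  m b
              else
                A' μr m
                  (Fin.cast (congrArg n (show (μc : ℕ) = (μr : ℕ) + 1 by
                    obtain ⟨h1, h2, h3⟩ := h; omega)) b))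
        else 0

/-- Admissibility of the reduction parameters `D^p` of the direct first-order
reduction: zero on the column of `v^{N-1}`; arbitrary on the columns of the `v^μ`
(`μ ≤ N-2`) and of the lower-level `d^μ_ν`; on the column of each top-level `d^ν`
symmetric in the upper indices `(j₁…j_{N-ν-1})` with vanishing total symmetrization over
`(p, j₁, …, j_{N-ν-1})`; and symmetric in the lower multi-index of each row. -/
def AdmissibleDN (N : ℕ) (n : ℕ → ℕ)
    (D : Fin 3 → Matrix (I1N N n) (I1N N n) ℂ) : Prop :=
  (∀ (p : Fin 3) (r : I1N N n) (νc : Fin N) (q : Fin (n νc)),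
      (νc : ℕ) = N - 1 → D p r (Sum.inl ⟨νc, q⟩) = 0) ∧
  (∀ (p : Fin 3) (r : I1N N n) (μc : Fin (N - 1)) (νc : Fin (N - 1 - (μc : ℕ)))
      (j : Fin ((νc : ℕ) + 1) → Fin 3) (b : Fin (n μc)),
      (νc : ℕ) + 1 = N - 1 - (μc : ℕ) →
      ∀ σ : Equiv.Perm (Fin ((νc : ℕ) + 1)),
        D p r (Sum.inr ⟨μc, νc, j ∘ σ, b⟩) = D p r (Sum.inr ⟨μc, νc, j, b⟩)) ∧
  (∀ (p : Fin 3) (r : I1N N n) (μc : Fin (N - 1)) (νc : Fin (N - 1 - (μc : ℕ)))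
      (j : Fin ((νc : ℕ) + 1) → Fin 3) (b : Fin (n μc)),
      (νc : ℕ) + 1 = N - 1 - (μc : ℕ) →
      ∑ σ : Equiv.Perm (Fin ((νc : ℕ) + 2)),
        D ((fun u : Fin ((νc : ℕ) + 2) =>
              if h0 : (u : ℕ) = 0 then p
              else j ⟨(u : ℕ) - 1, by have := u.isLt; omega⟩) (σ 0))
          r
          (Sum.inr ⟨μc, νc,
            (fun t' : Fin ((νc : ℕ) + 1) =>
              (fun u : Fin ((νc : ℕ) + 2) =>
                if h0 : (u : ℕ) = 0 then p
                else j ⟨(u : ℕ) - 1, by have := u.isLt; omega⟩) (σ t'.succ)), b⟩)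
        = 0) ∧
  (∀ (p : Fin 3) (μ : Fin (N - 1)) (ν : Fin (N - 1 - (μ : ℕ)))
      (i : Fin ((ν : ℕ) + 1) → Fin 3) (m : Fin (n μ)) (c : I1N N n)
      (σ : Equiv.Perm (Fin ((ν : ℕ) + 1))),
      D p (Sum.inr ⟨μ, ν, i ∘ σ, m⟩) c = D p (Sum.inr ⟨μ, ν, i, m⟩) c)

/-- The embedding of `W_N` (the block of the top-level variables
`(d⁰, …, d^{N-2}, v^{N-1})`) into the first-order state space. -/
def embN (N : ℕ) (n : ℕ → ℕ) (r : IWN N n) : I1N N n :=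
  if h : (r.1 : ℕ) = N - 1 then Sum.inl ⟨r.1, r.2.2⟩
  else
    Sum.inr ⟨⟨(r.1 : ℕ), by have := r.1.isLt; omega⟩,
      ⟨⟨N - 2 - (r.1 : ℕ),
          show N - 2 - (r.1 : ℕ) < N - 1 - (r.1 : ℕ) by have := r.1.isLt; omega⟩,
        (fun t => r.2.1
          (Fin.cast
            (show N - 2 - (r.1 : ℕ) + 1 = N - 1 - (r.1 : ℕ) by
              have := r.1.isLt; omega) t), r.2.2)⟩⟩

/-- The map `ι_s` sending `(y⁰, …, y^{N-1})` to the tuple with components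
`s_{i₁} ⋯ s_{i_{N-μ-1}} y^μ`. -/
noncomputable def iotaN (N : ℕ) (n : ℕ → ℕ) (s : Fin 3 → ℝ) :
    Matrix (IWN N n) (IN N n) ℂ :=
  Matrix.of fun r c =>
    if h : r.1 = c.1 then
      (∏ t, (s (r.2.1 t) : ℂ)) *
        (if r.2.2 = Fin.cast (congrArg (fun x : Fin N => n (x : ℕ)) h).symm c.2
          then 1 else 0)
    else 0

/-- Summing over a head and a tail is summing over the whole multi-index. -/
lemma sum_cons_eq_sum {α : Type*} [Fintype α] {l : ℕ} (F : (Fin (l + 1) → α) → ℂ) :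
    ∑ p, ∑ j : Fin l → α, F (Fin.cons p j) = ∑ J, F J := by
  rw [← Fintype.sum_prod_type' (f := fun p (j : Fin l → α) => F (Fin.cons p j))]
  exact Fintype.sum_equiv (Fin.consEquiv fun _ => α) _ _ fun _ => rfl

/-- Contracting a symmetrized Kronecker delta with a power of `s`. -/
lemma sum_prod_mul_delta {α : Type*} [Fintype α] [DecidableEq α] {a L M : ℕ} (h : a + L = M)
    (s : α → ℂ) (i : Fin a → α) (G : (Fin L → α) → ℂ) (σ : Equiv.Perm (Fin M))
    (τ : Equiv.Perm (Fin a)) :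
    ∑ J : Fin M → α, (∏ t, s (J t)) *
        ((∏ t : Fin a, if i (τ t) = J (σ (Fin.cast h (Fin.castAdd L t))) then (1 : ℂ) else 0) *
          G fun t => J (σ (Fin.cast h (Fin.natAdd a t)))) =
      (∏ t, s (i t)) * ∑ k, (∏ t, s (k t)) * G k := by
  subst h
  rw [← Equiv.sum_comp (Equiv.arrowCongr σ (Equiv.refl α)),
    ← Equiv.sum_comp (Fin.appendEquiv a L), Fintype.sum_prod_type,
    Fintype.sum_eq_single (i ∘ τ), Finset.mul_sum]
  · refine Finset.sum_congr rfl fun k _ => ?_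
    have h1 : ∏ t, s ((Equiv.arrowCongr σ (Equiv.refl α)) (Fin.append (i ∘ τ) k) t) =
        (∏ t, s (i t)) * ∏ t, s (k t) := by
      rw [← Equiv.prod_comp σ, Fin.prod_univ_add, ← Equiv.prod_comp τ fun t => s (i t)]
      simp [Equiv.arrowCongr]
    simp only [Fin.appendEquiv, Equiv.coe_fn_mk]
    rw [h1]
    simp [Equiv.arrowCongr, mul_assoc]
  · intro x hx
    refine Finset.sum_eq_zero fun k _ => ?_
    obtain ⟨t, ht⟩ := Function.ne_iff.1 hx
    rw [Finset.prod_eq_zero (Finset.mem_univ t), zero_mul, mul_zero]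
    rw [if_neg]
    simpa [Equiv.arrowCongr, Fin.appendEquiv] using fun h => ht h.symm

/-- A tensor with vanishing total symmetrization contracts to zero with a power of `s`. -/
lemma sum_prod_mul_eq_zero {α : Type*} [Fintype α] {M : ℕ} (s : α → ℂ)
    (F : (Fin M → α) → ℂ) (hF : ∀ J, ∑ σ : Equiv.Perm (Fin M), F (J ∘ σ) = 0) :
    ∑ J, (∏ t, s (J t)) * F J = 0 := by
  have h (σ : Equiv.Perm (Fin M)) :
      ∑ J, (∏ t, s (J t)) * F (J ∘ σ) = ∑ J, (∏ t, s (J t)) * F J := by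
    rw [← Equiv.sum_comp (Equiv.arrowCongr σ (Equiv.refl α))]
    refine Finset.sum_congr rfl fun J _ => ?_
    rw [← Equiv.prod_comp σ]
    have : ⇑(Equiv.arrowCongr σ (Equiv.refl α)) J ∘ ⇑σ = J := by
      ext t; simp [Equiv.arrowCongr]
    rw [this]
    simp [Equiv.arrowCongr]
  have h2 : ∑ σ : Equiv.Perm (Fin M), ∑ J, (∏ t, s (J t)) * F (J ∘ σ) = 0 := by
    rw [Finset.sum_comm]
    simp [← Finset.mul_sum, hF]
  simpa [h, Fintype.card_perm, Nat.factorial_ne_zero] using h2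

lemma dite_eq_cons {α : Type*} {l : ℕ} (p : α) (j : Fin (l + 1) → α) :
    (fun u : Fin (l + 2) => if _ : (u : ℕ) = 0 then p
      else j ⟨(u : ℕ) - 1, by have := u.isLt; omega⟩) = Fin.cons p j := by
  ext u
  refine Fin.cases ?_ (fun v => ?_) u <;> simp

lemma dite_cast_eq_cons {α : Type*} {l M : ℕ} (hM : M = l + 2) (p : α) (j : Fin (l + 1) → α) :
    (fun t : Fin M => if _ : (t : ℕ) = 0 then p
      else j ⟨(t : ℕ) - 1, by have := t.isLt; omega⟩) =
    (Fin.cons p j : Fin (l + 2) → α) ∘ Fin.cast hM := by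
  subst hM
  exact dite_eq_cons p j

lemma sum_comp_cast {α : Type*} [Fintype α] {l M : ℕ} (h : M = l) (s : α → ℂ)
    (F : (Fin M → α) → ℂ) :
    ∑ J : Fin l → α, (∏ t, s (J t)) * F (J ∘ Fin.cast h) =
      ∑ J : Fin M → α, (∏ t, s (J t)) * F J := by
  subst h
  rfl

lemma sum_head_tail {l : ℕ} (s : Fin 3 → ℂ) (F : (Fin (l + 1) → Fin 3) → ℂ) :
    ∑ p, s p * ∑ j : Fin l → Fin 3, (∏ t, s (j t)) * F (Fin.cons p j) =
      ∑ J, (∏ t, s (J t)) * F J := by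
  rw [← sum_cons_eq_sum]
  simp [Finset.mul_sum, Fin.prod_univ_succ, mul_assoc]

section Contraction

variable {N n}

lemma AdmissibleDN.contract {D : Fin 3 → Matrix (I1N N n) (I1N N n) ℂ}
    (hD : AdmissibleDN N n D) (s : Fin 3 → ℂ) (r : I1N N n) (μc : Fin (N - 1))
    (νc : Fin (N - 1 - (μc : ℕ))) (b : Fin (n μc)) (hc : (νc : ℕ) + 1 = N - 1 - (μc : ℕ)) :
    ∑ p, s p * ∑ j : Fin ((νc : ℕ) + 1) → Fin 3,
      (∏ t, s (j t)) * D p r (Sum.inr ⟨μc, νc, j, b⟩) = 0 := by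
  rw [← sum_prod_mul_eq_zero s
    (fun J : Fin ((νc : ℕ) + 2) → Fin 3 => D (J 0) r (Sum.inr ⟨μc, νc, Fin.tail J, b⟩)),
    ← sum_head_tail]
  · simp
  · intro J
    have := hD.2.2.1 (J 0) r μc νc (Fin.tail J) b hc
    rw [dite_eq_cons, Fin.cons_self_tail] at this
    exact this

lemma A0N_contract_inr_inr (s : Fin 3 → ℝ) (μr : Fin (N - 1)) (νr : Fin (N - 1 - (μr : ℕ)))
    (i : Fin ((νr : ℕ) + 1) → Fin 3) (m : Fin (n μr)) (μc : Fin (N - 1))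
    (νc : Fin (N - 1 - (μc : ℕ))) (b : Fin (n μc)) (hr : (νr : ℕ) + 1 = N - 1 - (μr : ℕ))
    (hc : (νc : ℕ) + 1 = N - 1 - (μc : ℕ)) :
    ∑ p, (s p : ℂ) * ∑ j : Fin ((νc : ℕ) + 1) → Fin 3, (∏ t, (s (j t) : ℂ)) *
        A0N N n A A' p (Sum.inr ⟨μr, νr, i, m⟩) (Sum.inr ⟨μc, νc, j, b⟩) =
      (∏ t, (s (i t) : ℂ)) *
        PN N n A A' s ⟨μr.castLE (Nat.sub_le N 1), m⟩ ⟨μc.castLE (Nat.sub_le N 1), b⟩ := by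
  have hμr := μr.isLt
  have hμc := μc.isLt
  by_cases hle : (μc : ℕ) ≤ (μr : ℕ) + 1
  swap
  · simp only [A0N, PN, Matrix.of_apply]
    rw [Finset.sum_eq_zero, dif_neg, dif_neg, mul_zero]
    · simp; omega
    · simp; omega
    · intro p _
      rw [Finset.sum_eq_zero, mul_zero]
      intro j _
      rw [dif_neg, mul_zero]
      omega
  have key (p : Fin 3) (j : Fin ((νc : ℕ) + 1) → Fin 3) :
      A0N N n A A' p (Sum.inr ⟨μr, νr, i, m⟩) (Sum.inr ⟨μc, νc, j, b⟩) =
        ((Nat.factorial ((νc : ℕ) + 2) : ℂ) * (Nat.factorial ((νr : ℕ) + 1) : ℂ))⁻¹ *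
          ∑ σ : Equiv.Perm (Fin ((νc : ℕ) + 2)), ∑ τ : Equiv.Perm (Fin ((νr : ℕ) + 1)),
            (fun J : Fin ((νc : ℕ) + 2) → Fin 3 => (∏ t : Fin ((νr : ℕ) + 1),
              (if i (τ t) = J (σ ⟨(t : ℕ), by omega⟩) then 1 else 0 : ℂ)) *
            (if hA : (μc : ℕ) ≤ (μr : ℕ) then
              A μr μc (fun t' : Fin ((μr : ℕ) - (μc : ℕ) + 1) =>
                J (σ ⟨(νr : ℕ) + 1 + (t' : ℕ), by omega⟩)) m b
            else A' μr m (Fin.cast (congrArg n (by omega)) b))) (Fin.cons p j) := by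
    rw [← dite_eq_cons]
    exact dif_pos (show (νr : ℕ) + 1 = N - 1 - (μr : ℕ) ∧ (νc : ℕ) + 1 = N - 1 - (μc : ℕ) ∧
      (μc : ℕ) ≤ (μr : ℕ) + 1 from ⟨hr, hc, hle⟩)
  simp only [key]
  rw [sum_head_tail (fun p => (s p : ℂ)) fun J =>
    ((Nat.factorial ((νc : ℕ) + 2) : ℂ) * (Nat.factorial ((νr : ℕ) + 1) : ℂ))⁻¹ *
      ∑ σ : Equiv.Perm (Fin ((νc : ℕ) + 2)), ∑ τ : Equiv.Perm (Fin ((νr : ℕ) + 1)),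
        (∏ t : Fin ((νr : ℕ) + 1),
              (if i (τ t) = J (σ ⟨(t : ℕ), by omega⟩) then 1 else 0 : ℂ)) *
            (if hA : (μc : ℕ) ≤ (μr : ℕ) then
              A μr μc (fun t' : Fin ((μr : ℕ) - (μc : ℕ) + 1) =>
                J (σ ⟨(νr : ℕ) + 1 + (t' : ℕ), by omega⟩)) m b
            else A' μr m (Fin.cast (congrArg n (by omega)) b))]
  have average (f : (Fin ((νc : ℕ) + 2) → Fin 3) → Equiv.Perm (Fin ((νc : ℕ) + 2)) →
      Equiv.Perm (Fin ((νr : ℕ) + 1)) → ℂ) (S : ℂ)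
      (hf : ∀ σ τ, ∑ J, (∏ t, (s (J t) : ℂ)) * f J σ τ = S) :
      ∑ J, (∏ t, (s (J t) : ℂ)) *
        (((Nat.factorial ((νc : ℕ) + 2) : ℂ) * (Nat.factorial ((νr : ℕ) + 1) : ℂ))⁻¹ *
          ∑ σ, ∑ τ, f J σ τ) = S := by
    have : ∑ J, (∏ t, (s (J t) : ℂ)) * ∑ σ, ∑ τ, f J σ τ =
        ((Nat.factorial ((νc : ℕ) + 2) : ℂ) * (Nat.factorial ((νr : ℕ) + 1) : ℂ)) * S := by
      simp only [Finset.mul_sum]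
      rw [Finset.sum_comm]
      simp only [Finset.sum_comm (s := (Finset.univ : Finset (Fin ((νc : ℕ) + 2) → Fin 3)))
        (t := (Finset.univ : Finset (Equiv.Perm (Fin ((νr : ℕ) + 1))))), hf]
      simp [Fintype.card_perm, mul_assoc]
    simp only [mul_left_comm _ (_⁻¹ : ℂ)]
    rw [← Finset.mul_sum, this, inv_mul_cancel_left₀]
    exact mul_ne_zero (Nat.cast_ne_zero.2 (Nat.factorial_ne_zero _))
      (Nat.cast_ne_zero.2 (Nat.factorial_ne_zero _))
  refine average _ _ fun σ τ => ?_
  by_cases hA : (μc : ℕ) ≤ (μr : ℕ)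
  · simp only [dif_pos hA]
    refine (sum_prod_mul_delta (L := (μr : ℕ) - (μc : ℕ) + 1) (by omega) (fun p => (s p : ℂ)) i
      (fun k => A μr μc k m b) σ τ).trans ?_
    simp only [PN, Matrix.of_apply, Fin.val_castLE]
    rw [dif_pos hA]
  · simp only [dif_neg hA]
    refine (sum_prod_mul_delta (L := 0) (by omega) (fun p => (s p : ℂ)) i
      (fun _ => A' μr m (Fin.cast (congrArg n (by omega)) b)) σ τ).trans ?_
    simp only [PN, Matrix.of_apply, Fin.val_castLE]
    rw [dif_neg hA, dif_pos (show (μc : ℕ) = (μr : ℕ) + 1 by omega)]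
    simp

lemma A0N_contract_inr_inl (s : Fin 3 → ℝ) (μr : Fin (N - 1)) (νr : Fin (N - 1 - (μr : ℕ)))
    (i : Fin ((νr : ℕ) + 1) → Fin 3) (m : Fin (n μr)) (κ : Fin N) (q : Fin (n κ))
    (hr : (νr : ℕ) + 1 = N - 1 - (μr : ℕ)) (hκ : (κ : ℕ) = N - 1) :
    ∑ p, (s p : ℂ) * A0N N n A A' p (Sum.inr ⟨μr, νr, i, m⟩) (Sum.inl ⟨κ, q⟩) =
      (∏ t, (s (i t) : ℂ)) * PN N n A A' s ⟨μr.castLE (Nat.sub_le N 1), m⟩ ⟨κ, q⟩ := by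
  have hμr := μr.isLt
  simp only [A0N, PN, Matrix.of_apply, Fin.val_castLE]
  rw [dif_neg (show ¬ (κ : ℕ) ≤ (μr : ℕ) by omega)]
  by_cases h : (μr : ℕ) + 1 = N - 1
  · rw [dif_pos (show (κ : ℕ) = (μr : ℕ) + 1 by omega)]
    simp only [dif_pos (show (νr : ℕ) + 1 = N - 1 - (μr : ℕ) ∧ (κ : ℕ) = N - 1 ∧
      (μr : ℕ) + 1 = N - 1 from ⟨hr, hκ, h⟩)]
    obtain ⟨v, hv⟩ := νr
    obtain rfl : v = 0 := by dsimp only at hr; omega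
    simp
  · rw [dif_neg (show ¬ (κ : ℕ) = (μr : ℕ) + 1 by omega)]
    simp [h]

lemma A0N_contract_inl_inr (s : Fin 3 → ℝ) (μ : Fin N) (m : Fin (n μ)) (μc : Fin (N - 1))
    (νc : Fin (N - 1 - (μc : ℕ))) (b : Fin (n μc)) (hμ : (μ : ℕ) = N - 1)
    (hc : (νc : ℕ) + 1 = N - 1 - (μc : ℕ)) :
    ∑ p, (s p : ℂ) * ∑ j : Fin ((νc : ℕ) + 1) → Fin 3, (∏ t, (s (j t) : ℂ)) *
        A0N N n A A' p (Sum.inl ⟨μ, m⟩) (Sum.inr ⟨μc, νc, j, b⟩) =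
      PN N n A A' s ⟨μ, m⟩ ⟨μc.castLE (Nat.sub_le N 1), b⟩ := by
  have hμc := μc.isLt
  obtain ⟨μ, hμN⟩ := μ
  dsimp only at hμ m
  subst hμ
  have key (p : Fin 3) (j : Fin ((νc : ℕ) + 1) → Fin 3) :
      A0N N n A A' p (Sum.inl ⟨⟨N - 1, hμN⟩, m⟩) (Sum.inr ⟨μc, νc, j, b⟩) =
        (fun J : Fin ((νc : ℕ) + 2) → Fin 3 =>
          A (N - 1) μc (J ∘ Fin.cast (show (N - 1) - (μc : ℕ) + 1 = (νc : ℕ) + 2 by omega)) m b)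
            (Fin.cons p j) := by
    dsimp only
    rw [← dite_cast_eq_cons]
    exact dif_pos (show N - 1 = N - 1 ∧ (νc : ℕ) + 1 = N - 1 - (μc : ℕ) from ⟨rfl, hc⟩)
  simp only [key]
  rw [sum_head_tail (fun p => (s p : ℂ)) fun J =>
      A (N - 1) μc (J ∘ Fin.cast (show (N - 1) - (μc : ℕ) + 1 = (νc : ℕ) + 2 by omega)) m b,
    sum_comp_cast _ (fun p => (s p : ℂ)) fun J => A (N - 1) μc J m b]
  simp only [PN, Matrix.of_apply, Fin.val_castLE]
  rw [dif_pos (by omega)]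

lemma A0N_contract_inl_inl (s : Fin 3 → ℝ) (μ : Fin N) (m : Fin (n μ)) (κ : Fin N)
    (q : Fin (n κ)) (hμ : (μ : ℕ) = N - 1) (hκ : (κ : ℕ) = N - 1) :
    ∑ p, (s p : ℂ) * A0N N n A A' p (Sum.inl ⟨μ, m⟩) (Sum.inl ⟨κ, q⟩) =
      PN N n A A' s ⟨μ, m⟩ ⟨κ, q⟩ := by
  obtain ⟨μ, hμN⟩ := μ
  obtain ⟨κ, hκN⟩ := κ
  dsimp only at hμ hκ m q
  subst hμ hκ
  simp only [PN, A0N, Matrix.of_apply]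
  rw [dif_pos le_rfl, ← sum_comp_cast (show N - 1 - (N - 1) + 1 = 1 by omega)
    (fun p => (s p : ℂ)) fun k => A (N - 1) (N - 1) k m q]
  rw [← Equiv.sum_comp (Equiv.funUnique (Fin 1) (Fin 3)).symm]
  refine Finset.sum_congr rfl fun p _ => ?_
  rw [dif_pos ⟨trivial, trivial⟩]
  have hp : (Equiv.funUnique (Fin 1) (Fin 3)).symm p ∘
      Fin.cast (show N - 1 - (N - 1) + 1 = 1 by omega) = fun _ => p :=
    funext fun _ => by simp [uniqueElim_const]
  rw [hp]
  simp

lemma embN_inl (μ : Fin N) (i : Fin (N - 1 - (μ : ℕ)) → Fin 3) (m : Fin (n μ))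
    (h : (μ : ℕ) = N - 1) : embN N n ⟨μ, i, m⟩ = Sum.inl ⟨μ, m⟩ :=
  dif_pos h

lemma embN_inr (μ : Fin N) (i : Fin (N - 1 - (μ : ℕ)) → Fin 3) (m : Fin (n μ))
    (h : (μ : ℕ) ≠ N - 1) :
    embN N n ⟨μ, i, m⟩ = Sum.inr ⟨⟨(μ : ℕ), by omega⟩,
      ⟨⟨N - 2 - (μ : ℕ), by dsimp only; omega⟩, i ∘ Fin.cast (by dsimp only; omega), m⟩⟩ :=
  dif_neg h

lemma embN_comp_cast (μ : Fin (N - 1)) (ν : Fin (N - 1 - (μ : ℕ)))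
    (i : Fin ((ν : ℕ) + 1) → Fin 3) (m : Fin (n μ)) (h : (ν : ℕ) + 1 = N - 1 - (μ : ℕ)) :
    embN N n ⟨μ.castLE (Nat.sub_le N 1), i ∘ Fin.cast h.symm, m⟩ = Sum.inr ⟨μ, ν, i, m⟩ := by
  have hμ := μ.isLt
  obtain ⟨v, hv⟩ := ν
  obtain rfl : v = N - 2 - (μ : ℕ) := by dsimp only at h; omega
  rw [embN_inr _ _ _ (by simp; omega)]
  rfl

lemma embN_injective : Function.Injective (embN N n) := by
  rintro ⟨μ, i, m⟩ ⟨μ', i', m'⟩ h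
  by_cases hμ : (μ : ℕ) = N - 1 <;> by_cases hμ' : (μ' : ℕ) = N - 1
  · rw [embN_inl _ _ _ hμ, embN_inl _ _ _ hμ'] at h
    obtain rfl : μ = μ' := Fin.ext (hμ.trans hμ'.symm)
    have : IsEmpty (Fin (N - 1 - (μ : ℕ))) := by rw [hμ, Nat.sub_self]; infer_instance
    obtain rfl : i = i' := Subsingleton.elim _ _
    simpa using h
  · rw [embN_inl _ _ _ hμ, embN_inr _ _ _ hμ'] at h
    cases h
  · rw [embN_inr _ _ _ hμ, embN_inl _ _ _ hμ'] at h
    cases h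
  · rw [embN_inr _ _ _ hμ, embN_inr _ _ _ hμ'] at h
    have h := Sum.inr.inj h
    obtain rfl : μ = μ' := Fin.ext (congrArg (fun x => (x.1 : ℕ)) h)
    simp only [Sigma.mk.injEq, heq_eq_eq, true_and, Prod.mk.injEq] at h
    obtain ⟨hi, rfl⟩ := h
    have hc : Function.Surjective
        (Fin.cast (show N - 2 - (μ : ℕ) + 1 = N - 1 - (μ : ℕ) by omega)) :=
      (finCongr (show N - 2 - (μ : ℕ) + 1 = N - 1 - (μ : ℕ) by omega)).surjective
    rw [hc.injective_comp_right hi]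

lemma A0N_eq_zero {p : Fin 3} {r : I1N N n} (hr : r ∉ Set.range (embN N n)) (c : I1N N n) :
    A0N N n A A' p r c = 0 := by
  rcases r with ⟨μ, m⟩ | ⟨μ, ν, i, m⟩
  · have hμ : (μ : ℕ) ≠ N - 1 := fun h =>
      hr ⟨⟨μ, fun _ => 0, m⟩, embN_inl _ _ _ h⟩
    rcases c with ⟨κ, q⟩ | ⟨μc, νc, j, b⟩ 
    · exact dif_neg fun h => hμ h.1
    · exact dif_neg fun h => hμ h.1
  · have hν : (ν : ℕ) + 1 ≠ N - 1 - (μ : ℕ) := fun h =>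
      hr ⟨_, embN_comp_cast μ ν i m h⟩
    rcases c with ⟨κ, q⟩ | ⟨μc, νc, j, b⟩ 
    · exact dif_neg fun h => hν h.1
    · exact dif_neg fun h => hν h.1

lemma sum_embN_inl (s : Fin 3 → ℂ) (f : I1N N n → ℂ) (κ : Fin N) (q : Fin (n κ))
    (h : (κ : ℕ) = N - 1) :
    ∑ j, (∏ t, s (j t)) * f (embN N n ⟨κ, j, q⟩) = f (Sum.inl ⟨κ, q⟩) := by
  have : IsEmpty (Fin (N - 1 - (κ : ℕ))) := by rw [h, Nat.sub_self]; infer_instance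
  simp [embN_inl _ _ _ h]

lemma sum_embN_inr (s : Fin 3 → ℂ) (f : I1N N n → ℂ) (κ : Fin N) (q : Fin (n κ))
    (h : (κ : ℕ) ≠ N - 1) :
    ∑ j, (∏ t, s (j t)) * f (embN N n ⟨κ, j, q⟩) =
      ∑ j : Fin (N - 2 - (κ : ℕ) + 1) → Fin 3, (∏ t, s (j t)) * f (Sum.inr ⟨⟨(κ : ℕ), by omega⟩,
        ⟨⟨N - 2 - (κ : ℕ), by dsimp only; omega⟩, j, q⟩⟩) := by
  simp only [embN_inr _ _ _ h]
  exact sum_comp_cast (show N - 2 - (κ : ℕ) + 1 = N - 1 - (κ : ℕ) by omega) s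
    fun j => f (Sum.inr ⟨⟨(κ : ℕ), by omega⟩,
        ⟨⟨N - 2 - (κ : ℕ), by dsimp only; omega⟩, j, q⟩⟩)

lemma AdmissibleDN.contract_embN {D : Fin 3 → Matrix (I1N N n) (I1N N n) ℂ}
    (hD : AdmissibleDN N n D) (s : Fin 3 → ℂ) (r : I1N N n) (κ : Fin N) (q : Fin (n κ)) :
    ∑ p, s p * ∑ j, (∏ t, s (j t)) * D p r (embN N n ⟨κ, j, q⟩) = 0 := by
  by_cases h : (κ : ℕ) = N - 1
  · simp [fun p => sum_embN_inl s (D p r) κ q h, hD.1 _ r κ q h]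
  · refine (Finset.sum_congr rfl fun p _ => congrArg _ (sum_embN_inr s (D p r) κ q h)).trans ?_
    exact hD.contract s r ⟨κ, by omega⟩ ⟨N - 2 - (κ : ℕ), by dsimp only; omega⟩ q
      (by dsimp only; omega)

lemma A0N_contract_embN (s : Fin 3 → ℝ) (w : IWN N n) (κ : Fin N) (q : Fin (n κ)) :
    ∑ p, (s p : ℂ) * ∑ j, (∏ t, (s (j t) : ℂ)) *
        A0N N n A A' p (embN N n w) (embN N n ⟨κ, j, q⟩) =
      (∏ t, (s (w.2.1 t) : ℂ)) * PN N n A A' s ⟨w.1, w.2.2⟩ ⟨κ, q⟩ := by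
  obtain ⟨μ, i, m⟩ := w
  by_cases hμ : (μ : ℕ) = N - 1
  · have : IsEmpty (Fin (N - 1 - (μ : ℕ))) := by rw [hμ, Nat.sub_self]; infer_instance
    rw [embN_inl _ _ _ hμ, Finset.prod_of_isEmpty, one_mul]
    by_cases hκ : (κ : ℕ) = N - 1
    · refine (Finset.sum_congr rfl fun p _ => congrArg _
        (sum_embN_inl (fun p => (s p : ℂ)) (A0N N n A A' p _) κ q hκ)).trans ?_
      exact A0N_contract_inl_inl A A' s μ m κ q hμ hκ
    · refine (Finset.sum_congr rfl fun p _ => congrArg _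
        (sum_embN_inr (fun p => (s p : ℂ)) (A0N N n A A' p _) κ q hκ)).trans ?_
      exact A0N_contract_inl_inr A A' s μ m ⟨κ, by omega⟩ ⟨N - 2 - (κ : ℕ), by dsimp only; omega⟩ q
        hμ (by dsimp only; omega)
  · rw [embN_inr _ _ _ hμ]
    have hi : ∏ t, (s (i t) : ℂ) =
        ∏ t, (s ((i ∘ Fin.cast (show N - 2 - (μ : ℕ) + 1 = N - 1 - (μ : ℕ) by omega)) t) : ℂ) :=
      (Equiv.prod_comp (finCongr (show N - 2 - (μ : ℕ) + 1 = N - 1 - (μ : ℕ) by omega))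
        fun t => (s (i t) : ℂ)).symm
    dsimp only
    rw [hi]
    by_cases hκ : (κ : ℕ) = N - 1
    · refine (Finset.sum_congr rfl fun p _ => congrArg _
        (sum_embN_inl (fun p => (s p : ℂ)) (A0N N n A A' p _) κ q hκ)).trans ?_
      exact A0N_contract_inr_inl A A' s ⟨μ, by omega⟩ ⟨N - 2 - (μ : ℕ), by dsimp only; omega⟩ _ m κ q
        (by dsimp only; omega) hκ
    · refine (Finset.sum_congr rfl fun p _ => congrArg _
        (sum_embN_inr (fun p => (s p : ℂ)) (A0N N n A A' p _) κ q hκ)).trans ?_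
      exact A0N_contract_inr_inr A A' s ⟨μ, by omega⟩ ⟨N - 2 - (μ : ℕ), by dsimp only; omega⟩ _ m
        ⟨κ, by omega⟩ ⟨N - 2 - (κ : ℕ), by dsimp only; omega⟩ q (by dsimp only; omega)
        (by dsimp only; omega)

lemma mul_iotaN_apply {m : Type*} (X : Matrix m (IWN N n) ℂ) (s : Fin 3 → ℝ) (r : m)
    (c : IN N n) :
    (X * iotaN N n s) r c = ∑ j, (∏ t, (s (j t) : ℂ)) * X r ⟨c.1, j, c.2⟩ := by
  rw [Matrix.mul_apply, Fintype.sum_sigma, Fintype.sum_eq_single c.1]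
  · rw [Fintype.sum_prod_type]
    refine Finset.sum_congr rfl fun j _ => ?_
    rw [Fintype.sum_eq_single c.2]
    · simp [iotaN, mul_comm]
    · intro a ha
      simp [iotaN, ha]
  · intro μ hμ
    refine Finset.sum_eq_zero fun x _ => ?_
    simp [iotaN, hμ]

lemma iotaN_mul_apply {m : Type*} (X : Matrix (IN N n) m ℂ) (s : Fin 3 → ℝ) (w : IWN N n)
    (c : m) :
    (iotaN N n s * X) w c = (∏ t, (s (w.2.1 t) : ℂ)) * X ⟨w.1, w.2.2⟩ c := by
  rw [Matrix.mul_apply, Fintype.sum_eq_single ⟨w.1, w.2.2⟩]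
  · simp [iotaN]
  · rintro ⟨μ, a⟩ h
    simp only [iotaN, Matrix.of_apply]
    split_ifs with h1 h2
    · obtain rfl : w.1 = μ := h1
      simp_all
    · simp
    · simp

variable (N n) in
/-- The embedding of `W_N` into the first-order state space as a matrix. -/
noncomputable def embMatrix : Matrix (I1N N n) (IWN N n) ℂ :=
  (1 : Matrix (I1N N n) (I1N N n) ℂ).submatrix id (embN N n)

lemma mul_embMatrix {m : Type*} (X : Matrix m (I1N N n) ℂ) :
    X * embMatrix N n = X.submatrix id (embN N n) := by
  conv_rhs => rw [← Matrix.mul_one X,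
    Matrix.submatrix_mul X 1 id id (embN N n) Function.bijective_id]
  rfl

lemma submatrix_embN (X : Matrix (I1N N n) (I1N N n) ℂ) :
    X.submatrix (embN N n) (embN N n) = (embMatrix N n)ᴴ * X * embMatrix N n := by
  have h : (embMatrix N n)ᴴ = (1 : Matrix (I1N N n) (I1N N n) ℂ).submatrix (embN N n) id := by
    rw [embMatrix, Matrix.conjTranspose_submatrix, Matrix.conjTranspose_one]
  rw [Matrix.mul_assoc, mul_embMatrix, h]
  conv_lhs => rw [← Matrix.one_mul X,
    Matrix.submatrix_mul 1 X (embN N n) id (embN N n) Function.bijective_id]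

lemma embMatrix_mul_apply {m : Type*} (X : Matrix (IWN N n) m ℂ) (w : IWN N n) (c : m) :
    (embMatrix N n * X) (embN N n w) c = X w c := by
  simp [embMatrix, Matrix.mul_apply, Matrix.one_apply, -Fintype.sum_sum_type,
    embN_injective.eq_iff]

lemma embMatrix_apply_eq_zero {r : I1N N n} (hr : r ∉ Set.range (embN N n)) (w : IWN N n) :
    embMatrix N n r w = 0 :=
  Matrix.one_apply_ne fun h => hr ⟨w, h.symm⟩

/-- On `ι_s`, the principal symbol of the first-order reduction is intertwined with `P_N(s)`. -/
lemma symbol_mul_embMatrix_mul_iotaN {D : Fin 3 → Matrix (I1N N n) (I1N N n) ℂ}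
    (hD : AdmissibleDN N n D) (s : Fin 3 → ℝ) :
    (∑ p, (s p : ℂ) • (A0N N n A A' p + D p)) * (embMatrix N n * iotaN N n s) =
      embMatrix N n * iotaN N n s * PN N n A A' s := by
  ext r ⟨κ, q⟩
  have hL : ((∑ p, (s p : ℂ) • (A0N N n A A' p + D p)) * (embMatrix N n * iotaN N n s)) r ⟨κ, q⟩ =
      ∑ p, (s p : ℂ) * ∑ j, (∏ t, (s (j t) : ℂ)) * A0N N n A A' p r (embN N n ⟨κ, j, q⟩) := by
    rw [Matrix.sum_mul, Matrix.sum_apply,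
      ← add_zero (∑ p, (s p : ℂ) *
        ∑ j : Fin (N - 1 - (κ : ℕ)) → Fin 3, (∏ t, (s (j t) : ℂ)) * A0N N n A A' p r _),
      ← hD.contract_embN (fun p => (s p : ℂ)) r κ q, ← Finset.sum_add_distrib]
    refine Finset.sum_congr rfl fun p _ => ?_
    rw [Matrix.smul_mul, Matrix.smul_apply, ← Matrix.mul_assoc, mul_embMatrix, mul_iotaN_apply,
      smul_eq_mul, ← mul_add, ← Finset.sum_add_distrib]
    simp [mul_add]
  rw [hL, Matrix.mul_assoc]
  by_cases hr : r ∈ Set.range (embN N n)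
  · obtain ⟨w, rfl⟩ := hr
    rw [A0N_contract_embN, embMatrix_mul_apply, iotaN_mul_apply]
  · simp [A0N_eq_zero A A' hr, Matrix.mul_apply (M := embMatrix N n),
      embMatrix_apply_eq_zero hr]

lemma embMatrix_mulVec_apply (y : IWN N n → ℂ) (w : IWN N n) :
    (embMatrix N n *ᵥ y) (embN N n w) = y w := by
  simp [embMatrix, Matrix.mulVec, dotProduct, Matrix.one_apply, -Fintype.sum_sum_type,
    embN_injective.eq_iff]

lemma embMatrix_mulVec_symm (y : IWN N n → ℂ)
    (hy : ∀ (μ : Fin N) (i : Fin (N - 1 - (μ : ℕ)) → Fin 3) (a : Fin (n μ))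
      (σ : Equiv.Perm (Fin (N - 1 - (μ : ℕ)))), y ⟨μ, (i ∘ σ, a)⟩ = y ⟨μ, (i, a)⟩)
    (μ : Fin (N - 1)) (ν : Fin (N - 1 - (μ : ℕ))) (i : Fin ((ν : ℕ) + 1) → Fin 3)
    (m : Fin (n μ)) (σ : Equiv.Perm (Fin ((ν : ℕ) + 1))) :
    (embMatrix N n *ᵥ y) (Sum.inr ⟨μ, ν, i ∘ σ, m⟩) =
      (embMatrix N n *ᵥ y) (Sum.inr ⟨μ, ν, i, m⟩) := by
  by_cases h : (ν : ℕ) + 1 = N - 1 - (μ : ℕ)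
  · rw [← embN_comp_cast _ _ _ _ h, ← embN_comp_cast _ _ _ _ h, embMatrix_mulVec_apply,
      embMatrix_mulVec_apply]
    exact hy (μ.castLE (Nat.sub_le N 1)) (i ∘ Fin.cast h.symm) m ((finCongr h).permCongr σ)
  · have h0 (i : Fin ((ν : ℕ) + 1) → Fin 3) :
        (Sum.inr ⟨μ, ν, i, m⟩ : I1N N n) ∉ Set.range (embN N n) := by
      rintro ⟨⟨κ, j, q⟩, hw⟩
      by_cases hκ : (κ : ℕ) = N - 1
      · rw [embN_inl _ _ _ hκ] at hw
        cases hw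
      · rw [embN_inr _ _ _ hκ] at hw
        have hw := Sum.inr.inj hw
        have h1 : (κ : ℕ) = μ := congrArg (fun x => (x.1 : ℕ)) hw
        have h2 : N - 2 - (κ : ℕ) = ν := congrArg (fun x => (x.2.1 : ℕ)) hw
        have := μ.isLt
        omega
    simp [Matrix.mulVec, dotProduct, embMatrix_apply_eq_zero (h0 _)]

end Contraction


/-- for `N ≥ 2`, first-order symmetric hyperbolicity implies FTNS symmetric
hyperbolicity: if `H₁` is a Hermitian symmetrizer, positive definite on the first-order
state space, of a direct first-order reduction `A₁^p = A₀^p + D^p`, then its diagonal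
block `H₂₂` over the top-level variables `(d⁰, …, d^{N-2}, v^{N-1})` is an FTNS
symmetrizer. -/
theorem stmt_6 (hN : 2 ≤ N)
    (D : Fin 3 → Matrix (I1N N n) (I1N N n) ℂ) (hD : AdmissibleDN N n D)
    (H1 : Matrix (I1N N n) (I1N N n) ℂ)
    (hH1herm : H1.IsHermitian)
    (hH1pos : ∀ x : I1N N n → ℂ,
      (∀ (μ : Fin (N - 1)) (ν : Fin (N - 1 - (μ : ℕ))) (i : Fin ((ν : ℕ) + 1) → Fin 3)
          (m : Fin (n μ)) (σ : Equiv.Perm (Fin ((ν : ℕ) + 1))),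
        x (Sum.inr ⟨μ, ν, i ∘ σ, m⟩) = x (Sum.inr ⟨μ, ν, i, m⟩)) →
      x ≠ 0 → 0 < (star x ⬝ᵥ (H1 *ᵥ x)).re)
    (hHA : ∀ p, (H1 * (A0N N n A A' p + D p)).IsHermitian) :
    (H1.submatrix (embN N n) (embN N n)).IsHermitian ∧
    (∀ y : IWN N n → ℂ,
      (∀ (μ : Fin N) (i : Fin (N - 1 - (μ : ℕ)) → Fin 3) (a : Fin (n μ))
          (σ : Equiv.Perm (Fin (N - 1 - (μ : ℕ)))),
        y ⟨μ, (i ∘ σ, a)⟩ = y ⟨μ, (i, a)⟩) →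
      y ≠ 0 → 0 < (star y ⬝ᵥ ((H1.submatrix (embN N n) (embN N n)) *ᵥ y)).re) ∧
    (∀ s : Fin 3 → ℝ, (∑ i, s i ^ 2) = 1 →
      ((iotaN N n s)ᴴ * H1.submatrix (embN N n) (embN N n) * iotaN N n s *
        PN N n A A' s).IsHermitian) := by
  have hsub := submatrix_embN (N := N) (n := n) H1
  refine ⟨hH1herm.submatrix _, fun y hy hy0 => ?_, fun s _ => ?_⟩
  · rw [hsub, ← Matrix.mulVec_mulVec, ← Matrix.mulVec_mulVec, Matrix.dotProduct_mulVec,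
      ← Matrix.star_mulVec]
    refine hH1pos _ (embMatrix_mulVec_symm y hy) fun h => hy0 ?_
    ext w
    rw [← embMatrix_mulVec_apply y w, h]
    rfl
  · set E := embMatrix N n * iotaN N n s with hE
    have hS : (H1 * ∑ p, (s p : ℂ) • (A0N N n A A' p + D p)).IsHermitian := by
      rw [Matrix.mul_sum, Matrix.IsHermitian, Matrix.conjTranspose_sum]
      refine Finset.sum_congr rfl fun p _ => ?_
      rw [Matrix.mul_smul, Matrix.conjTranspose_smul, (hHA p).eq]
      simp
    have h : (iotaN N n s)ᴴ * H1.submatrix (embN N n) (embN N n) * iotaN N n s *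
        PN N n A A' s = Eᴴ * (H1 * ∑ p, (s p : ℂ) • (A0N N n A A' p + D p)) * E := by
      rw [Matrix.mul_assoc Eᴴ, Matrix.mul_assoc H1, hE, symbol_mul_embMatrix_mul_iotaN A A' hD,
        hsub, Matrix.conjTranspose_mul]
      simp only [Matrix.mul_assoc]
    rw [h]
    exact Matrix.isHermitian_conjTranspose_mul_mul _ hS
end
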